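/- Assume h(t,x,·) is convex on ℝ^m for every (t,x), and that the optimal control problem admits an optimal admissible pair (x*,u*), unique up to equality for Lebesgue-a.e. t. Let (η*, η_T*) be an optimal solution to (Q) with disintegration dη*(t,x,u) = dν*(u|t,x) dη̄*(t,x), where η̄* is the (t,x)-marginal of η* and ν*(·|t,x) is a stochastic kernel on U. Then for η̄*-a.e. (t,x): F(t,x,u*(t)) = ∫_U F(t,x,u) dν*(u|t,x). If moreover every column of g(t, x*(t)) is nonzero for Lebesgue-a.e. t ∈ [0,T], then u*(t) = ∫_U u dν*(u|t,x) for η̄*-a.e. (t,x). -/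

import Mathlib

open MeasureTheory Set ProbabilityTheory

noncomputable section

/-- The input constraint set `U = [-1,1]^m`. -/
def Ubox (m : ℕ) : Set (Fin m → ℝ) := Set.Icc (fun _ => (-1 : ℝ)) (fun _ => (1 : ℝ))

/-- The controlled vector field `F(t,x,u) = f(t,x) + g(t,x) u`. -/
def Fvec {n m : ℕ} (f : ℝ × (Fin n → ℝ) → Fin n → ℝ)
    (g : ℝ × (Fin n → ℝ) → Fin n → Fin m → ℝ)
    (z : ℝ × (Fin n → ℝ) × (Fin m → ℝ)) : Fin n → ℝ :=
  fun k => f (z.1, z.2.1) k + ∑ j, g (z.1, z.2.1) k j * z.2.2 j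

/-- `(L_F v)(t,x,u) = ∂v/∂t + Σ_k (∂v/∂x_k)·[F(t,x,u)]_k`. -/
def LFop {n m : ℕ} (f : ℝ × (Fin n → ℝ) → Fin n → ℝ)
    (g : ℝ × (Fin n → ℝ) → Fin n → Fin m → ℝ)
    (v : ℝ × (Fin n → ℝ) → ℝ) (z : ℝ × (Fin n → ℝ) × (Fin m → ℝ)) : ℝ :=
  fderiv ℝ v (z.1, z.2.1) ((1 : ℝ), (0 : Fin n → ℝ)) +
    ∑ k, fderiv ℝ v (z.1, z.2.1) ((0 : ℝ), Pi.single k (1 : ℝ)) * Fvec f g z k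

/-- Liouville's equation for a pair of measures `(η, ηT)` with initial point `x₀`. -/
def SatisfiesLiouville {n m : ℕ} (T : ℝ) (x₀ : Fin n → ℝ)
    (f : ℝ × (Fin n → ℝ) → Fin n → ℝ) (g : ℝ × (Fin n → ℝ) → Fin n → Fin m → ℝ)
    (η : Measure (ℝ × (Fin n → ℝ) × (Fin m → ℝ))) (ηT : Measure (Fin n → ℝ)) : Prop :=
  ∀ v : ℝ × (Fin n → ℝ) → ℝ, ContDiff ℝ 1 v →
    v (0, x₀) + ∫ z, LFop f g v z ∂η = ∫ y, v (T, y) ∂ηT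

/-- An admissible pair: a Borel measurable control `u` with values in `U` and an
absolutely continuous trajectory `x` with `x(0) = x₀`, `x(T) ∈ X_T`, `x(t) ∈ X` on `[0,T]`
and `ẋ = F(t,x,u)` a.e. (encoded in integral form). -/
def IsAdmissiblePair {n m : ℕ} (T : ℝ) (X XT : Set (Fin n → ℝ)) (x₀ : Fin n → ℝ)
    (f : ℝ × (Fin n → ℝ) → Fin n → ℝ) (g : ℝ × (Fin n → ℝ) → Fin n → Fin m → ℝ)
    (x : ℝ → Fin n → ℝ) (u : ℝ → Fin m → ℝ) : Prop :=
  Measurable u ∧ (∀ t ∈ Set.Icc (0 : ℝ) T, u t ∈ Ubox m) ∧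
  x 0 = x₀ ∧ x T ∈ XT ∧ (∀ t ∈ Set.Icc (0 : ℝ) T, x t ∈ X) ∧
  IntegrableOn (fun s => Fvec f g (s, x s, u s)) (Set.Icc (0 : ℝ) T) volume ∧
  ∀ t ∈ Set.Icc (0 : ℝ) T, x t = x₀ + ∫ s in Set.Icc (0 : ℝ) t, Fvec f g (s, x s, u s)

/-- The cost `J(x,u) = ∫₀^T h(t,x(t),u(t)) dt + H(x(T))` of an admissible pair. -/
def Jcost {n m : ℕ} (T : ℝ) (h : ℝ × (Fin n → ℝ) × (Fin m → ℝ) → ℝ)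
    (H : (Fin n → ℝ) → ℝ) (x : ℝ → Fin n → ℝ) (u : ℝ → Fin m → ℝ) : ℝ :=
  (∫ t in Set.Icc (0 : ℝ) T, h (t, x t, u t)) + H (x T)

/-- The set of costs of admissible pairs; its infimum is `J*`. -/
def JVals {n m : ℕ} (T : ℝ) (X XT : Set (Fin n → ℝ)) (x₀ : Fin n → ℝ)
    (f : ℝ × (Fin n → ℝ) → Fin n → ℝ) (g : ℝ × (Fin n → ℝ) → Fin n → Fin m → ℝ)
    (h : ℝ × (Fin n → ℝ) × (Fin m → ℝ) → ℝ) (H : (Fin n → ℝ) → ℝ) : Set ℝ :=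
  {c | ∃ (x : ℝ → Fin n → ℝ) (u : ℝ → Fin m → ℝ),
    IsAdmissiblePair T X XT x₀ f g x u ∧ c = Jcost T h H x u}

/-- Feasibility for problem `(Q)`. -/
def QFeasible {n m : ℕ} (T : ℝ) (X XT : Set (Fin n → ℝ)) (x₀ : Fin n → ℝ)
    (f : ℝ × (Fin n → ℝ) → Fin n → ℝ) (g : ℝ × (Fin n → ℝ) → Fin n → Fin m → ℝ)
    (η : Measure (ℝ × (Fin n → ℝ) × (Fin m → ℝ))) (ηT : Measure (Fin n → ℝ)) : Prop :=
  IsFiniteMeasure η ∧ IsFiniteMeasure ηT ∧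
  η ((Set.Icc (0 : ℝ) T ×ˢ X ×ˢ Ubox m)ᶜ) = 0 ∧ ηT (XTᶜ) = 0 ∧
  SatisfiesLiouville T x₀ f g η ηT

/-- The cost `⟨η,h⟩ + ⟨η_T,H⟩` of a pair of measures. -/
def Qcost {n m : ℕ} (h : ℝ × (Fin n → ℝ) × (Fin m → ℝ) → ℝ) (H : (Fin n → ℝ) → ℝ)
    (η : Measure (ℝ × (Fin n → ℝ) × (Fin m → ℝ))) (ηT : Measure (Fin n → ℝ)) : ℝ :=
  ∫ z, h z ∂η + ∫ y, H y ∂ηT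

/-- The set of costs of feasible points of `(Q)`; its infimum is `q*`. -/
def QVals {n m : ℕ} (T : ℝ) (X XT : Set (Fin n → ℝ)) (x₀ : Fin n → ℝ)
    (f : ℝ × (Fin n → ℝ) → Fin n → ℝ) (g : ℝ × (Fin n → ℝ) → Fin n → Fin m → ℝ)
    (h : ℝ × (Fin n → ℝ) × (Fin m → ℝ) → ℝ) (H : (Fin n → ℝ) → ℝ) : Set ℝ :=
  {c | ∃ (η : Measure (ℝ × (Fin n → ℝ) × (Fin m → ℝ))) (ηT : Measure (Fin n → ℝ)),
    QFeasible T X XT x₀ f g η ηT ∧ c = Qcost h H η ηT}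

/-!
If a smooth `v` satisfies `L_F v + q ≥ 0` on the data set and `v(T, ·) ≤ Φ` on `X_T`, then
Liouville's equation bounds the value of `(Q)` with costs `q`, `Φ` from below by `v(0, x₀)`.
Conversely, such `v` are obtained by mollifying the value function of polygonal trajectories whose
data are evaluated at slightly shifted points (Krylov's shaking of the coefficients), with the
state and terminal constraints replaced by penalties. Hence a bound on the value of `(Q)` yields
approximate trajectories of at most that cost, and a limit of these (Arzelà–Ascoli for the states,
weak convergence for the controls, Tonelli's lower semicontinuity theorem for the costs) is an
admissible pair, the dynamics being affine and the cost convex in the control.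

Apply this to the cost `h - s ψ` with `ψ` concave in the control. The pair `(η*, η_T*)` bounds the
value by `q* - s ∫ ψ dη*`, so as `s → 0` the trajectories converge to an optimal one, that is, to
`(x*, u*)`, and the first-order term gives `∫ ψ dη* ≤ ∫ ψ(t, x*(t), u*(t)) dt`, with equality when
`ψ` is affine in the control. The choice `ψ = φ(t, x)` shows that the `(t, x)`-marginal of `η*` is
the law of `(t, x*(t))`, and `ψ = φ(t, x) u_j` that the barycenter of `ν*(·|t, x)` is `u*(t)`.
-/

section Mollification

variable {S A : Type*} [NormedAddCommGroup S] [NormedSpace ℝ S]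

open scoped Topology in
lemma fderiv_add_nonneg_of_forall_le {v : S → ℝ} {z w : S} {c δ : ℝ} (hδ : 0 < δ)
    (hv : DifferentiableAt ℝ v z) (hstep : ∀ τ ∈ Ioc 0 δ, v z ≤ τ * c + v (z + τ • w)) :
    0 ≤ fderiv ℝ v z w + c := by
  have hderiv : HasDerivAt (fun τ : ℝ => v (z + τ • w)) (fderiv ℝ v z w) 0 := by
    have hv' : HasFDerivAt v (fderiv ℝ v z) (z + (0 : ℝ) • w) := by simpa using hv.hasFDerivAt
    have hline : HasDerivAt (fun τ : ℝ => z + τ • w) w 0 := by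
      simpa using ((hasDerivAt_id (0 : ℝ)).smul_const w).const_add z
    exact hv'.comp_hasDerivAt 0 hline
  have hslope : -c ≤ fderiv ℝ v z w := by
    refine ge_of_tendsto hderiv.tendsto_slope_zero_right ?_
    filter_upwards [Ioc_mem_nhdsGT hδ] with τ hτ
    simp only [zero_add, zero_smul, add_zero, smul_eq_mul]
    rw [inv_mul_eq_div, le_div_iff₀ hτ.1]
    linarith [hstep τ hτ]
  linarith

/-- Subsolutions of the discrete dynamic programming inequality for the dynamics `ż = G z u` and
the running cost `ℓ`, in Krylov's "shaken" form: over a step of length `τ ≤ δ`, the coefficients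
are read at any point `z + e` within `δ` of the current position. -/
def IsShakenSubsolution (U : Set A) (δ : ℝ) (G : S → A → S) (ℓ : S → A → ℝ) (V : S → ℝ) : Prop :=
  ∀ ⦃z e u τ⦄, τ ∈ Ioc 0 δ → ‖e‖ ≤ δ → u ∈ U → V z ≤ τ * ℓ (z + e) u + V (z + τ • G (z + e) u)

variable [FiniteDimensional ℝ S] [MeasurableSpace S] [BorelSpace S]
  {μ : Measure S} [μ.IsAddHaarMeasure]

open ContinuousLinearMap in
open scoped Convolution in
lemma normed_convolution_le_add (φ : ContDiffBump (0 : S)) {V W : S → ℝ}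
    (hV : LocallyIntegrable V μ) (hW : LocallyIntegrable W μ) {z z' : S} {c : ℝ}
    (hle : ∀ y, ‖y‖ ≤ φ.rOut → V (z - y) ≤ W (z' - y) + c) :
    (φ.normed μ ⋆[lsmul ℝ ℝ, μ] V) z ≤ (φ.normed μ ⋆[lsmul ℝ ℝ, μ] W) z' + c := by
  have hint : ∀ {Q : S → ℝ}, LocallyIntegrable Q μ → ∀ z,
      Integrable (fun y => φ.normed μ y * Q (z - y)) μ := fun hQ z =>
    φ.hasCompactSupport_normed.convolutionExists_left (lsmul ℝ ℝ) φ.continuous_normed hQ z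
  have hc := (φ.integrable_normed (μ := μ)).mul_const c
  calc (φ.normed μ ⋆[lsmul ℝ ℝ, μ] V) z
      ≤ ∫ y, (φ.normed μ y * W (z' - y) + φ.normed μ y * c) ∂μ := by
        refine integral_mono (hint hV z) ((hint hW z').add hc) fun y => ?_
        by_cases hy : ‖y‖ ≤ φ.rOut
        · simpa [mul_add] using mul_le_mul_of_nonneg_left (hle y hy) (φ.nonneg_normed (μ := μ) y)
        · have hzero : φ.normed μ y = 0 := Function.notMem_support.1 fun hmem => hy <| by
            rw [φ.support_normed_eq] at hmem
            exact (mem_ball_zero_iff.1 hmem).le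
          simp [hzero]
    _ = _ := by
        rw [integral_add (hint hW z') hc, integral_mul_const, φ.integral_normed, one_mul]
        rfl

open ContinuousLinearMap in
open scoped Convolution in
theorem IsShakenSubsolution.exists_contDiff {U : Set A} {δ : ℝ} {G : S → A → S} {ℓ : S → A → ℝ}
    {V : S → ℝ} (hV : IsShakenSubsolution U δ G ℓ V) (hδ : 0 < δ) (hVint : LocallyIntegrable V μ) :
    ∃ v : S → ℝ, ContDiff ℝ 1 v ∧ (∀ z, ∀ u ∈ U, 0 ≤ fderiv ℝ v z (G z u) + ℓ z u) ∧
      (∀ z c, (∀ y, ‖y‖ ≤ δ → V (z - y) ≤ c) → v z ≤ c) ∧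
      ∀ z c, (∀ y, ‖y‖ ≤ δ → c ≤ V (z - y)) → c ≤ v z := by
  let φ : ContDiffBump (0 : S) := ⟨δ / 2, δ, by positivity, by linarith⟩
  let v : S → ℝ := φ.normed μ ⋆[lsmul ℝ ℝ, μ] V
  have hv : ContDiff ℝ 1 v := mod_cast φ.hasCompactSupport_normed.contDiff_convolution_left
    (n := 1) (lsmul ℝ ℝ) (mod_cast φ.contDiff_normed) hVint
  have hzero : LocallyIntegrable (0 : S → ℝ) μ := locallyIntegrable_zero
  refine ⟨v, hv, fun z u hu => ?_, fun z c hc => ?_, fun z c hc => ?_⟩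
  · refine fderiv_add_nonneg_of_forall_le hδ (hv.differentiable one_ne_zero z) fun τ hτ => ?_
    rw [add_comm]
    refine normed_convolution_le_add φ hVint hVint fun y hy => ?_
    have hstep := hV (z := z - y) hτ hy hu
    rw [sub_add_cancel] at hstep
    rw [add_sub_right_comm]
    linarith
  · have := normed_convolution_le_add φ hVint hzero (z := z) (z' := z) (c := c)
      (by simpa using hc)
    simpa [convolution_zero] using this
  · have := normed_convolution_le_add φ hzero hVint (z := z) (z' := z) (c := -c)
      (fun y hy => by simpa using hc y hy)
    simpa [convolution_zero] using this

end Mollification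

section ShakenValue

variable {S A : Type*} [NormedAddCommGroup S] {U : Set A} {δ : ℝ}
  {G : S → A → S} {ℓ : S → A → ℝ} {Φ : S → ℝ}

/-- Admissible step lists of a shaken polygon: in a step `(τ, e, u)` the constant control `u ∈ U`
is used during the time `τ ∈ (0, δ]` and the coefficients are read at the displacement `e`,
`‖e‖ ≤ δ`. -/
def IsShakenPolygon (U : Set A) (δ : ℝ) (l : List (ℝ × S × A)) : Prop :=
  ∀ s ∈ l, s.1 ∈ Ioc 0 δ ∧ ‖s.2.1‖ ≤ δ ∧ s.2.2 ∈ U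

lemma isShakenPolygon_nil : IsShakenPolygon U δ ([] : List (ℝ × S × A)) := by
  simp [IsShakenPolygon]

lemma isShakenPolygon_cons {τ : ℝ} {e : S} {u : A} {l : List (ℝ × S × A)} :
    IsShakenPolygon U δ ((τ, e, u) :: l) ↔
      (τ ∈ Ioc 0 δ ∧ ‖e‖ ≤ δ ∧ u ∈ U) ∧ IsShakenPolygon U δ l := by
  simp [IsShakenPolygon]

instance : Nonempty {l : List (ℝ × S × A) // IsShakenPolygon U δ l} := ⟨⟨[], isShakenPolygon_nil⟩⟩

variable [NormedSpace ℝ S]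

/-- Running cost `ℓ` accumulated along the shaken polygon with the given steps and initial point,
plus the terminal cost `Φ` at its end point. -/
def shakenCost (G : S → A → S) (ℓ : S → A → ℝ) (Φ : S → ℝ) : List (ℝ × S × A) → S → ℝ
  | [], z => Φ z
  | (τ, e, u) :: l, z => τ * ℓ (z + e) u + shakenCost G ℓ Φ l (z + τ • G (z + e) u)

/-- Value function of the control problem over shaken polygons, with free end time. -/
def shakenValue (U : Set A) (δ : ℝ) (G : S → A → S) (ℓ : S → A → ℝ) (Φ : S → ℝ) (z : S) : ℝ :=
  ⨅ l : {l : List (ℝ × S × A) // IsShakenPolygon U δ l}, shakenCost G ℓ Φ l z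

lemma continuous_shakenCost (hG : ∀ u ∈ U, Continuous fun z => G z u)
    (hℓ : ∀ u ∈ U, Continuous fun z => ℓ z u) (hΦ : Continuous Φ) :
    ∀ {l : List (ℝ × S × A)}, IsShakenPolygon U δ l → Continuous (shakenCost G ℓ Φ l)
  | [], _ => hΦ
  | (τ, e, u) :: l, hl => by
    obtain ⟨⟨-, -, hu⟩, hl⟩ := isShakenPolygon_cons.1 hl
    have hshift : Continuous fun z : S => z + e := by fun_prop
    exact (((hℓ u hu).comp hshift).const_mul τ).add ((continuous_shakenCost hG hℓ hΦ hl).comp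
      (continuous_id.add (((hG u hu).comp hshift).const_smul τ)))

lemma IsShakenSubsolution.le_shakenCost {θ : S → ℝ} (hθ : IsShakenSubsolution U δ G ℓ θ)
    (hθΦ : ∀ z, θ z ≤ Φ z) :
    ∀ {l : List (ℝ × S × A)}, IsShakenPolygon U δ l → ∀ z, θ z ≤ shakenCost G ℓ Φ l z
  | [], _, z => hθΦ z
  | (τ, e, u) :: l, hl, z => by
    obtain ⟨⟨hτ, he, hu⟩, hl⟩ := isShakenPolygon_cons.1 hl
    exact (hθ hτ he hu).trans (by grw [hθ.le_shakenCost hθΦ hl]; rfl)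

variable {θ : S → ℝ} (hθ : IsShakenSubsolution U δ G ℓ θ) (hθΦ : ∀ z, θ z ≤ Φ z)

include hθ hθΦ

lemma shakenValue_le {l : List (ℝ × S × A)} (hl : IsShakenPolygon U δ l) (z : S) :
    shakenValue U δ G ℓ Φ z ≤ shakenCost G ℓ Φ l z :=
  ciInf_le ⟨θ z, forall_mem_range.2 fun l => hθ.le_shakenCost hθΦ l.2 z⟩
    (⟨l, hl⟩ : {l : List (ℝ × S × A) // IsShakenPolygon U δ l})

lemma isShakenSubsolution_shakenValue :
    IsShakenSubsolution U δ G ℓ (shakenValue U δ G ℓ Φ) := by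
  intro z e u τ hτ he hu
  rw [← sub_le_iff_le_add']
  refine le_ciInf fun l => sub_le_iff_le_add'.2 ?_
  exact shakenValue_le hθ hθΦ (isShakenPolygon_cons.2 ⟨⟨hτ, he, hu⟩, l.2⟩) z

lemma locallyIntegrable_shakenValue [MeasurableSpace S] [BorelSpace S] {μ : Measure S}
    [IsLocallyFiniteMeasure μ] (hθc : Continuous θ)
    (hG : ∀ u ∈ U, Continuous fun z => G z u) (hℓ : ∀ u ∈ U, Continuous fun z => ℓ z u)
    (hΦ : Continuous Φ) : LocallyIntegrable (shakenValue U δ G ℓ Φ) μ := by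
  have husc : UpperSemicontinuous (shakenValue U δ G ℓ Φ) := upperSemicontinuous_ciInf
    (fun z => ⟨θ z, forall_mem_range.2 fun l => hθ.le_shakenCost hθΦ l.2 z⟩)
    fun l => (continuous_shakenCost hG hℓ hΦ l.2).upperSemicontinuous
  refine (hθc.abs.add hΦ.abs).locallyIntegrable.mono husc.measurable.aestronglyMeasurable
    (.of_forall fun z => ?_)
  have hlow : θ z ≤ shakenValue U δ G ℓ Φ z := le_ciInf fun l => hθ.le_shakenCost hθΦ l.2 z
  have hupp : shakenValue U δ G ℓ Φ z ≤ Φ z := shakenValue_le hθ hθΦ isShakenPolygon_nil z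
  exact (abs_le_max_abs_abs hlow hupp).trans <|
    (max_le_add_of_nonneg (abs_nonneg _) (abs_nonneg _)).trans (le_abs_self _)

theorem exists_contDiff_le_of_lt_exists_shakenPolygon [FiniteDimensional ℝ S] (hδ : 0 < δ)
    (hθc : Continuous θ) (hG : ∀ u ∈ U, Continuous fun z => G z u)
    (hℓ : ∀ u ∈ U, Continuous fun z => ℓ z u) (hΦ : Continuous Φ) :
    ∃ v : S → ℝ, ContDiff ℝ 1 v ∧ (∀ z, ∀ u ∈ U, 0 ≤ fderiv ℝ v z (G z u) + ℓ z u) ∧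
      (∀ z c, (∀ y, ‖y‖ ≤ δ → Φ (z - y) ≤ c) → v z ≤ c) ∧
      ∀ z c, v z < c → ∃ y, ‖y‖ ≤ δ ∧ ∃ l, IsShakenPolygon U δ l ∧
        shakenCost G ℓ Φ l (z - y) < c := by
  borelize S
  obtain ⟨v, hv, hsub, hupp, hlow⟩ := (isShakenSubsolution_shakenValue hθ hθΦ).exists_contDiff hδ
    (locallyIntegrable_shakenValue hθ hθΦ (μ := Measure.addHaar) hθc hG hℓ hΦ)
  refine ⟨v, hv, hsub, fun z c hc => hupp z c fun y hy =>
    (shakenValue_le hθ hθΦ isShakenPolygon_nil _).trans (hc y hy), fun z c hc => ?_⟩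
  by_contra! hcon
  exact hc.not_ge (hlow z c fun y hy => le_ciInf fun l => hcon y hy l.1 l.2)

end ShakenValue

section TimeIntegral

variable {F : Type*} [NormedAddCommGroup F]

lemma intervalIntegrable_comp_path {P : Type*} [TopologicalSpace P] [SecondCountableTopology P]
    [MeasurableSpace P] [BorelSpace P] {q : ℝ × P → F} {b : ℝ} (hq : Continuous q)
    (hqb : ∀ z, ‖q z‖ ≤ b) {p : ℝ → P} (hp : Measurable p) (s t : ℝ) :
    IntervalIntegrable (fun r => q (r, p r)) volume s t :=
  (intervalIntegrable_const (c := b)).mono_fun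
    (hq.stronglyMeasurable.comp_measurable (measurable_id.prodMk hp)).aestronglyMeasurable
    (.of_forall fun _ => (hqb _).trans (le_abs_self b))

lemma norm_smul_sub_intervalIntegral_le [NormedSpace ℝ F] [CompleteSpace F] {φ : ℝ → F} {c : F}
    {t τ ε : ℝ} (hτ : 0 ≤ τ) (hφ : IntervalIntegrable φ volume t (t + τ))
    (hc : ∀ r ∈ Ioo t (t + τ), dist (φ r) c ≤ ε) :
    ‖τ • c - ∫ r in t..t + τ, φ r‖ ≤ ε * τ := by
  have hint : ∫ r in t..t + τ, (φ r - c) = -(τ • c - ∫ r in t..t + τ, φ r) := by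
    rw [intervalIntegral.integral_sub hφ intervalIntegrable_const]
    simp
  rw [← norm_neg, ← hint, intervalIntegral.integral_of_le (by linarith),
    integral_Ioc_eq_integral_Ioo]
  calc ‖∫ r in Ioo t (t + τ), (φ r - c)‖
      ≤ ε * volume.real (Ioo t (t + τ)) :=
        norm_setIntegral_le_of_norm_le_const (by simp) fun r hr => by
          simpa [dist_eq_norm] using hc r hr
    _ = ε * τ := by simp [hτ]

lemma norm_intervalIntegral_sub_intervalIntegral_le [NormedSpace ℝ F] {φ : ℝ → F} {b : ℝ}
    (hφ : ∀ s t, IntervalIntegrable φ volume s t)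
    (hφb : ∀ t, ‖φ t‖ ≤ b) (s t s' t' : ℝ) :
    ‖(∫ r in s..t, φ r) - ∫ r in s'..t', φ r‖ ≤ b * |s' - s| + b * |t - t'| := by
  rw [intervalIntegral.integral_interval_sub_interval_comm' (hφ _ _) (hφ _ _) (hφ _ _),
    abs_sub_comm s', add_comm]
  exact (norm_sub_le _ _).trans <| add_le_add
    (intervalIntegral.norm_integral_le_of_norm_le_const fun r _ => hφb r)
    (intervalIntegral.norm_integral_le_of_norm_le_const fun r _ => hφb r)

lemma norm_intervalIntegral_le_mul_max_add_mul_max [NormedSpace ℝ F] {φ : ℝ → F} {b : ℝ}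
    (hφb : ∀ t, ‖φ t‖ ≤ b) (s t : ℝ) :
    ‖∫ r in s..t, φ r‖ ≤ b * max (t - s) 0 + b * max (s - t) 0 := by
  have habs : |t - s| = max (t - s) 0 + max (s - t) 0 := by
    simpa [max_comm] using (max_zero_add_max_neg_zero_eq_abs_self (t - s)).symm
  rw [← mul_add, ← habs]
  exact intervalIntegral.norm_integral_le_of_norm_le_const fun r _ => hφb r

lemma abs_sub_mul_le_of_cost_le {P : Type*} {ℓ : ℝ × P → ℝ} {Φ : P → ℝ} {p : ℝ → P}
    {b c C T ε κ t₀ t₁ : ℝ} (hℓb : ∀ z, ‖ℓ z‖ ≤ b) (hε : ε ≤ 1) (hΦc : ∀ x, -c ≤ Φ x)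
    (ht₀ : |t₀| ≤ 1) (ht : t₀ ≤ t₁)
    (hcost : (∫ r in t₀..t₁, ℓ (r, p r)) + (Φ (p t₁) + κ * |t₁ - T|) ≤ C + ε * (t₁ - t₀)) :
    (κ - b - 1) * |t₁ - T| ≤ C + c + (b + 1) * (T + 1) := by
  have hb : 0 ≤ b := (norm_nonneg _).trans (hℓb (0, p 0))
  have hint := intervalIntegral.norm_integral_le_of_norm_le_const (a := t₀) (b := t₁)
    fun r _ => hℓb (r, p r)
  rw [abs_of_nonneg (by linarith), Real.norm_eq_abs] at hint
  have hlen : t₁ - t₀ ≤ |t₁ - T| + (T + 1) := by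
    linarith [le_abs_self (t₁ - T), (abs_le.1 ht₀).1]
  have := mul_le_mul_of_nonneg_left hlen (by linarith : 0 ≤ b + 1)
  have := mul_le_mul_of_nonneg_right hε (sub_nonneg.2 ht)
  linarith [hΦc (p t₁), (abs_le.1 hint).1]

end TimeIntegral

section PolygonEnd

variable {S A : Type*} {l : List (ℝ × S × A)}

/-- Time at which a polygon that starts at time `t` ends. -/
def polygonEnd (l : List (ℝ × S × A)) (t : ℝ) : ℝ := t + (l.map Prod.fst).sum

lemma polygonEnd_cons {τ : ℝ} {e : S} {u : A} (t : ℝ) :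
    polygonEnd ((τ, e, u) :: l) t = polygonEnd l (t + τ) := by
  simp [polygonEnd, add_assoc]

lemma IsShakenPolygon.le_polygonEnd [NormedAddCommGroup S] {U : Set A} {δ : ℝ}
    (hl : IsShakenPolygon U δ l) (t : ℝ) : t ≤ polygonEnd l t :=
  le_add_of_nonneg_right <| List.sum_nonneg fun _ hτ => by
    obtain ⟨s, hs, rfl⟩ := List.mem_map.1 hτ
    exact (hl s hs).1.1.le

end PolygonEnd

section PolygonPath

variable {E V F : Type*} [NormedAddCommGroup E] [NormedSpace ℝ E]

/-- The autonomous vector field `(1, G)` on space-time associated with a controlled field `G`. -/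
def spaceTimeField (G : ℝ × E × V → E) (z : ℝ × E) (u : V) : ℝ × E := (1, G (z.1, z.2, u))

/-- State and control along a shaken polygon starting from `z`, as functions of time. The state is
taken constant during each step, and `u₀` is the control used after the last step. -/
def polygonPath (G : ℝ × E × V → E) (u₀ : V) : List (ℝ × (ℝ × E) × V) → ℝ × E → ℝ → E × V
  | [], z, _ => (z.2, u₀)
  | (τ, e, u) :: l, z, s =>
    if s < z.1 + τ then (z.2, u) else polygonPath G u₀ l (z + τ • spaceTimeField G (z + e) u) s

variable {u₀ : V} {U : Set V} {δ : ℝ}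

lemma polygonPath_snd_mem {G : ℝ × E × V → E} (hu₀ : u₀ ∈ U) : ∀ {l : List (ℝ × (ℝ × E) × V)},
    IsShakenPolygon U δ l → ∀ z s, (polygonPath G u₀ l z s).2 ∈ U
  | [], _, _, _ => hu₀
  | (τ, e, u) :: l, hl, z, s => by
    obtain ⟨⟨-, -, hu⟩, hl⟩ := isShakenPolygon_cons.1 hl
    unfold polygonPath
    split_ifs
    exacts [hu, polygonPath_snd_mem hu₀ hl _ s]

variable {G : ℝ × E × V → E} {l : List (ℝ × (ℝ × E) × V)} {z e : ℝ × E} {τ : ℝ} {u : V}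

lemma polygonPath_cons_of_lt {s : ℝ} (hs : s < z.1 + τ) :
    polygonPath G u₀ ((τ, e, u) :: l) z s = (z.2, u) := if_pos hs

lemma polygonPath_cons_of_le {s : ℝ} (hs : z.1 + τ ≤ s) :
    polygonPath G u₀ ((τ, e, u) :: l) z s =
      polygonPath G u₀ l (z + τ • spaceTimeField G (z + e) u) s := if_neg hs.not_gt

lemma measurable_polygonPath [MeasurableSpace E] [MeasurableSpace V] (G : ℝ × E × V → E) (u₀ : V) :
    ∀ (l : List (ℝ × (ℝ × E) × V)) (z : ℝ × E), Measurable (polygonPath G u₀ l z)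
  | [], _ => measurable_const
  | (_, _, _) :: l, _ =>
    .ite measurableSet_Iio measurable_const (measurable_polygonPath G u₀ l _)

variable [SecondCountableTopology E] [MeasurableSpace E] [BorelSpace E]
  [PseudoMetricSpace V] [SecondCountableTopology V] [MeasurableSpace V] [BorelSpace V]

section OneStep

variable [NormedAddCommGroup F] [NormedSpace ℝ F] {q : ℝ × E × V → F} {b ε : ℝ}
  (hq : Continuous q) (hqb : ∀ z, ‖q z‖ ≤ b)

include hq hqb in
lemma intervalIntegral_polygonPath_cons {s : ℝ} (hs : z.1 + τ ≤ s) :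
    ∫ r in z.1..s, q (r, polygonPath G u₀ ((τ, e, u) :: l) z r) =
      (∫ r in z.1..z.1 + τ, q (r, polygonPath G u₀ ((τ, e, u) :: l) z r)) +
        ∫ r in z.1 + τ..s, q (r, polygonPath G u₀ l (z + τ • spaceTimeField G (z + e) u) r) := by
  have hint := intervalIntegrable_comp_path hq hqb
    (measurable_polygonPath G u₀ ((τ, e, u) :: l) z)
  rw [← intervalIntegral.integral_add_adjacent_intervals (hint _ (z.1 + τ)) (hint _ _)]
  congr 1
  refine intervalIntegral.integral_congr_Ioo_of_le hs fun r hr => ?_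
  simp only [polygonPath_cons_of_le hr.1.le]

include hq hqb in
lemma norm_smul_sub_intervalIntegral_polygonPath_le [CompleteSpace F]
    (hmod : ∀ z z', dist z z' ≤ 2 * δ → dist (q z) (q z') ≤ ε) (hτ : τ ∈ Ioc 0 δ) (he : ‖e‖ ≤ δ) :
    ‖τ • q ((z + e).1, (z + e).2, u) -
      ∫ r in z.1..z.1 + τ, q (r, polygonPath G u₀ ((τ, e, u) :: l) z r)‖ ≤ ε * τ := by
  refine norm_smul_sub_intervalIntegral_le hτ.1.le (intervalIntegrable_comp_path hq hqb
    (measurable_polygonPath G u₀ _ z) _ _) fun r hr => hmod _ _ ?_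
  have he1 : |e.1| ≤ δ := (norm_fst_le e).trans he
  have he2 : ‖e.2‖ ≤ δ := (norm_snd_le e).trans he
  rw [polygonPath_cons_of_lt hr.2]
  simp only [Prod.dist_eq, Prod.fst_add, Prod.snd_add, dist_self, dist_self_add_right,
    Real.dist_eq]
  have := abs_le.1 he1
  refine max_le (abs_le.2 ?_) (max_le (by linarith [norm_nonneg e]) (by linarith [norm_nonneg e]))
  constructor <;> linarith [hr.1, hr.2, hτ.2]

end OneStep

variable {b ε : ℝ}

lemma intervalIntegral_add_polygonPath_le {ℓ : ℝ × E × V → ℝ} (hℓ : Continuous ℓ)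
    (hℓb : ∀ z, ‖ℓ z‖ ≤ b) (hmod : ∀ z z', dist z z' ≤ 2 * δ → dist (ℓ z) (ℓ z') ≤ ε)
    (Φ : ℝ × E → ℝ) : ∀ {l : List (ℝ × (ℝ × E) × V)}, IsShakenPolygon U δ l → ∀ z : ℝ × E,
      (∫ r in z.1..polygonEnd l z.1, ℓ (r, polygonPath G u₀ l z r)) +
          Φ (polygonEnd l z.1, (polygonPath G u₀ l z (polygonEnd l z.1)).1) ≤
        shakenCost (spaceTimeField G) (fun z u => ℓ (z.1, z.2, u)) Φ l z +
          ε * (polygonEnd l z.1 - z.1)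
  | [], _, z => by simp [polygonEnd, polygonPath, shakenCost]
  | (τ, e, u) :: l, hl, z => by
    obtain ⟨⟨hτ, he, -⟩, hl⟩ := isShakenPolygon_cons.1 hl
    have hend : z.1 + τ ≤ polygonEnd l (z.1 + τ) := hl.le_polygonEnd _
    have htail := intervalIntegral_add_polygonPath_le hℓ hℓb hmod Φ hl
      (z + τ • spaceTimeField G (z + e) u)
    have hhead := (Real.norm_eq_abs _).symm.trans_le
      (norm_smul_sub_intervalIntegral_polygonPath_le (G := G) (u₀ := u₀) (l := l) (z := z) (u := u)
      hℓ hℓb hmod hτ he)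
    have htime : (z + τ • spaceTimeField G (z + e) u).1 = z.1 + τ := by simp [spaceTimeField]
    rw [htime] at htail
    rw [polygonEnd_cons, intervalIntegral_polygonPath_cons hℓ hℓb hend,
      polygonPath_cons_of_le hend, shakenCost]
    rw [smul_eq_mul] at hhead
    linarith [(abs_le.1 hhead).1]

lemma norm_polygonPath_sub_intervalIntegral_le [CompleteSpace E] (hG : Continuous G)
    (hGb : ∀ z, ‖G z‖ ≤ b) (hmod : ∀ z z', dist z z' ≤ 2 * δ → dist (G z) (G z') ≤ ε)
    (hε : 0 ≤ ε) (hδ : 0 ≤ δ) : ∀ {l : List (ℝ × (ℝ × E) × V)}, IsShakenPolygon U δ l →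
      ∀ (z : ℝ × E) (s : ℝ),
        ‖(polygonPath G u₀ l z s).1 - z.2 - ∫ r in z.1..s, G (r, polygonPath G u₀ l z r)‖ ≤
          ε * |s - z.1| + b * δ + b * max (s - polygonEnd l z.1) 0 + b * max (z.1 - s) 0
  | [], _, z, s => by
    have hint := norm_intervalIntegral_le_mul_max_add_mul_max (fun r => hGb (r, z.2, u₀)) z.1 s
    have hb : 0 ≤ b := (norm_nonneg _).trans (hGb (0, 0, u₀))
    have : 0 ≤ ε * |s - z.1| + b * δ := by positivity
    simp only [polygonPath, polygonEnd, List.map_nil, List.sum_nil, add_zero, sub_self, zero_sub,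
      norm_neg]
    linarith
  | (τ, e, u) :: l, hl, z, s => by
    obtain ⟨⟨hτ, he, -⟩, hl⟩ := isShakenPolygon_cons.1 hl
    rcases lt_or_ge s (z.1 + τ) with hsτ | hsτ
    · have hint := norm_intervalIntegral_le_mul_max_add_mul_max
        (fun r => hGb (r, polygonPath G u₀ ((τ, e, u) :: l) z r)) z.1 s
      have hb : 0 ≤ b := (norm_nonneg _).trans (hGb (0, 0, u₀))
      have hstep : b * max (s - z.1) 0 ≤ b * δ := by
        gcongr
        exact max_le (by linarith [hτ.2]) hδ
      have : 0 ≤ ε * |s - z.1| + b * max (s - polygonEnd ((τ, e, u) :: l) z.1) 0 := by positivity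
      rw [polygonPath_cons_of_lt hsτ, sub_self, zero_sub, norm_neg]
      linarith
    · have htail := norm_polygonPath_sub_intervalIntegral_le hG hGb hmod hε hδ hl
        (z + τ • spaceTimeField G (z + e) u) s
      have hhead := norm_smul_sub_intervalIntegral_polygonPath_le (G := G) (u₀ := u₀) (l := l)
        (z := z) (u := u) hG hGb hmod hτ he
      have htime : (z + τ • spaceTimeField G (z + e) u).1 = z.1 + τ := by simp [spaceTimeField]
      have hspace : (z + τ • spaceTimeField G (z + e) u).2 =
          z.2 + τ • G ((z + e).1, (z + e).2, u) := rfl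
      have hτ0 := hτ.1
      rw [htime, hspace, abs_of_nonneg (by linarith), max_eq_right (a := z.1 + τ - s)
        (by linarith)] at htail
      rw [polygonEnd_cons, intervalIntegral_polygonPath_cons hG hGb hsτ,
        polygonPath_cons_of_le hsτ, abs_of_nonneg (by linarith), max_eq_right (a := z.1 - s)
        (by linarith)]
      refine (le_of_eq ?_).trans ((norm_add_le _ _).trans ((add_le_add htail hhead).trans_eq ?_))
      · congr 1; abel
      · ring

end PolygonPath

section Duality

variable {E V : Type*} [NormedAddCommGroup E] [NormedSpace ℝ E]

/-- Smooth subsolutions on `D` of the Hamilton–Jacobi inequality `∂ₜv + ⟨∂ₓv, G⟩ + ℓ ≥ 0`. These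
are the variables of the linear program dual to `(Q)`. -/
structure IsSmoothSubsolution (D : Set (ℝ × E × V)) (G : ℝ × E × V → E) (ℓ : ℝ × E × V → ℝ)
    (v : ℝ × E → ℝ) : Prop where
  contDiff : ContDiff ℝ 1 v
  fderiv_add_nonneg : ∀ z ∈ D, 0 ≤ fderiv ℝ v (z.1, z.2.1) (1, G z) + ℓ z

/-- The dual linear program, which maximizes `v (0, x₀)` over the smooth subsolutions `v` on `D`
with `v (T, ·) ≤ Φ` on `K`, has value at most `C`. -/
def DualValueLE (D : Set (ℝ × E × V)) (K : Set E) (G : ℝ × E × V → E) (ℓ : ℝ × E × V → ℝ)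
    (Φ : E → ℝ) (T : ℝ) (x₀ : E) (C : ℝ) : Prop :=
  ∀ v, IsSmoothSubsolution D G ℓ v → (∀ x ∈ K, v (T, x) ≤ Φ x) → v (0, x₀) ≤ C

/-- Measurable paths `x` of states and `u` of controls, the latter with values in `U`. -/
structure IsControlledPath [MeasurableSpace E] [MeasurableSpace V] (U : Set V) (x : ℝ → E)
    (u : ℝ → V) : Prop where
  measurable_state : Measurable x
  measurable_control : Measurable u
  control_mem : ∀ t, u t ∈ U

/-- Trajectories on `[0, T]` of the control system `ẋ = G (t, x, u)`, `u ∈ U`, starting from `x₀`,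
up to an error `ε` in the integrated equation. The exact trajectories are those with `ε = 0`. -/
structure IsApproxTrajectory [MeasurableSpace E] [MeasurableSpace V] (G : ℝ × E × V → E)
    (U : Set V) (T : ℝ) (x₀ : E) (ε : ℝ) (x : ℝ → E) (u : ℝ → V) : Prop
    extends IsControlledPath U x u where
  norm_sub_integral_le : ∀ t ∈ Icc 0 T, ‖x t - x₀ - ∫ s in 0..t, G (s, x s, u s)‖ ≤ ε

variable {G : ℝ × E × V → E} {ℓ : ℝ × E × V → ℝ} {Φ : E → ℝ} {U : Set V} {T b κ δ ε α C : ℝ}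
  {x₀ : E} {u₀ : V} {L : NNReal} {z : ℝ × E} {l : List (ℝ × (ℝ × E) × V)}

lemma isShakenSubsolution_terminal (hℓ : ∀ z, -b ≤ ℓ z) (c : ℝ) :
    IsShakenSubsolution U δ (spaceTimeField G) (fun z u => ℓ (z.1, z.2, u))
      fun z => b * (z.1 - T) - c := by
  intro z e u τ hτ _ _
  simp only [spaceTimeField, Prod.fst_add, Prod.smul_fst, smul_eq_mul, mul_one]
  have := mul_le_mul_of_nonneg_left (hℓ (z.1 + e.1, (z + e).2, u)) hτ.1.le
  linarith

omit [NormedSpace ℝ E] in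
lemma terminal_penalty_le_add (hΦ : LipschitzWith L Φ) (hκ : 0 ≤ κ) (x : E) {y : ℝ × E}
    (hy : ‖y‖ ≤ δ) :
    Φ ((T, x) - y).2 + κ * |((T, x) - y).1 - T| ≤ Φ x + (L + κ) * δ := by
  have hy1 : |y.1| ≤ δ := (norm_fst_le y).trans hy
  have hy2 : ‖y.2‖ ≤ δ := (norm_snd_le y).trans hy
  have hlip := hΦ.dist_le_mul (x - y.2) x
  rw [Real.dist_eq, dist_self_sub_left] at hlip
  simp only [Prod.fst_sub, Prod.snd_sub, sub_sub_cancel_left, abs_neg]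
  linarith [(abs_le.1 hlip).2, mul_le_mul_of_nonneg_left hy2 L.coe_nonneg,
    mul_le_mul_of_nonneg_left hy1 hκ]

theorem DualValueLE.exists_shakenPolygon [FiniteDimensional ℝ E] [TopologicalSpace V] {c : ℝ}
    (hdual : DualValueLE {z | z.2.2 ∈ U} univ G ℓ Φ T x₀ C) (hG : Continuous G)
    (hℓ : Continuous ℓ) (hℓb : ∀ z, ‖ℓ z‖ ≤ b) (hΦ : LipschitzWith L Φ) (hΦc : ∀ x, -c ≤ Φ x)
    (hb : 0 ≤ b) (hκ : b ≤ κ) (hδ : 0 < δ) (hδα : (L + κ) * δ < α) :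
    ∃ z : ℝ × E, ‖(0, x₀) - z‖ ≤ δ ∧ ∃ l, IsShakenPolygon U δ l ∧
      shakenCost (spaceTimeField G) (fun z u => ℓ (z.1, z.2, u))
        (fun z => Φ z.2 + κ * |z.1 - T|) l z < C + α := by
  have hκ0 : 0 ≤ κ := hb.trans hκ
  have hθΦ : ∀ z : ℝ × E, b * (z.1 - T) - c ≤ Φ z.2 + κ * |z.1 - T| := fun z => by
    have := mul_le_mul_of_nonneg_left (le_abs_self (z.1 - T)) hb
    have := mul_le_mul_of_nonneg_right hκ (abs_nonneg (z.1 - T))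
    linarith [hΦc z.2]
  obtain ⟨v, hv, hsub, hupp, hlow⟩ := exists_contDiff_le_of_lt_exists_shakenPolygon
    (isShakenSubsolution_terminal (G := G) (U := U) (δ := δ) (fun z => (abs_le.1 (hℓb z)).1) c)
    hθΦ hδ (by fun_prop) (fun u _ => by unfold spaceTimeField; fun_prop) (fun u _ => by fun_prop)
    (by have := hΦ.continuous; fun_prop)
  have hv0 : v (0, x₀) - (L + κ) * δ ≤ C := by
    refine hdual (fun z => v z - (L + κ) * δ) ⟨hv.sub contDiff_const, fun z hz => ?_⟩
      fun x _ => sub_le_iff_le_add.2 (hupp _ _ fun y hy => terminal_penalty_le_add hΦ hκ0 x hy)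
    rw [fderiv_sub_const]
    exact hsub (z.1, z.2.1) z.2.2 hz
  obtain ⟨y, hy, l, hl, hcost⟩ := hlow (0, x₀) (C + α) (by linarith)
  exact ⟨(0, x₀) - y, by simpa using hy, l, hl, hcost⟩

lemma IsApproxTrajectory.mono [MeasurableSpace E] [MeasurableSpace V] {x : ℝ → E} {u : ℝ → V}
    {ε' : ℝ} (h : IsApproxTrajectory G U T x₀ ε x u) (hε : ε ≤ ε') :
    IsApproxTrajectory G U T x₀ ε' x u :=
  { h with norm_sub_integral_le := fun t ht => (h.norm_sub_integral_le t ht).trans hε }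

section Estimates

variable [FiniteDimensional ℝ E] [MeasurableSpace E] [BorelSpace E]
  [PseudoMetricSpace V] [SecondCountableTopology V] [MeasurableSpace V] [BorelSpace V]

variable (hl : IsShakenPolygon U δ l)
  (hG : Continuous G) (hGb : ∀ z, ‖G z‖ ≤ b)
  (hmod : ∀ z z', dist z z' ≤ 2 * δ → dist (G z) (G z') ≤ α) (hδ : 0 ≤ δ) (hδα : δ ≤ α)
  (hα : α ≤ 1) (hend : |polygonEnd l z.1 - T| ≤ α)

include hl hG hGb hmod hδ hδα hα hend

lemma norm_polygonPath_sub_intervalIntegral_le_mul (hz : |z.1| ≤ δ) {t : ℝ}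
    (ht : t ∈ Icc 0 (T + 1)) :
    ‖(polygonPath G u₀ l z t).1 - z.2 - ∫ r in z.1..t, G (r, polygonPath G u₀ l z r)‖ ≤
      α * (T + 2) + 3 * b * α + b * max (t - T) 0 := by
  have hb : 0 ≤ b := (norm_nonneg _).trans (hGb (0, 0, u₀))
  have hz' := abs_le.1 hz
  have hdist : |t - z.1| ≤ T + 2 := abs_le.2 ⟨by linarith [ht.1, ht.2], by linarith [ht.2]⟩
  have hlate : max (t - polygonEnd l z.1) 0 ≤ α + max (t - T) 0 :=
    max_le (by linarith [le_max_left (t - T) 0, (abs_le.1 hend).1])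
      (add_nonneg (hδ.trans hδα) (le_max_right _ _))
  have hearly : max (z.1 - t) 0 ≤ α := max_le (by linarith [ht.1]) (by linarith)
  have := norm_polygonPath_sub_intervalIntegral_le (u₀ := u₀) hG hGb hmod (hδ.trans hδα) hδ hl z t
  linarith [mul_le_mul_of_nonneg_left hdist (hδ.trans hδα), mul_le_mul_of_nonneg_left hδα hb,
    mul_le_mul_of_nonneg_left hlate hb, mul_le_mul_of_nonneg_left hearly hb]

lemma IsShakenPolygon.isApproxTrajectory (hu₀ : u₀ ∈ U) (hz : ‖(0, x₀) - z‖ ≤ δ) :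
    IsApproxTrajectory G U T x₀ (α * (T + 3) + 4 * b * α) (fun t => (polygonPath G u₀ l z t).1)
      fun t => (polygonPath G u₀ l z t).2 := by
  have hb : 0 ≤ b := (norm_nonneg _).trans (hGb (0, 0, u₀))
  have hz1 : |z.1| ≤ δ := by simpa using (norm_fst_le _).trans hz
  have hz2 : ‖z.2 - x₀‖ ≤ δ := by simpa [norm_sub_rev] using (norm_snd_le _).trans hz
  have hP := measurable_polygonPath G u₀ l z
  refine ⟨⟨measurable_fst.comp hP, measurable_snd.comp hP, polygonPath_snd_mem hu₀ hl z⟩,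
    fun t ht => ?_⟩
  have hdefect := norm_polygonPath_sub_intervalIntegral_le_mul (u₀ := u₀) hl hG hGb hmod hδ hδα hα
    hend hz1 (t := t) ⟨ht.1, by linarith [ht.2]⟩
  rw [max_eq_right (by linarith [ht.2])] at hdefect
  have hshift := norm_intervalIntegral_sub_intervalIntegral_le
    (intervalIntegrable_comp_path hG hGb hP) (fun r => hGb _) z.1 t 0 t
  have hsplit : (polygonPath G u₀ l z t).1 - x₀ - ∫ r in 0..t, G (r, polygonPath G u₀ l z r) =
      ((polygonPath G u₀ l z t).1 - z.2 - ∫ r in z.1..t, G (r, polygonPath G u₀ l z r)) +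
      (z.2 - x₀) + ((∫ r in z.1..t, G (r, polygonPath G u₀ l z r)) -
        ∫ r in 0..t, G (r, polygonPath G u₀ l z r)) := by abel
  refine (congrArg norm hsplit).trans_le (norm_add₃_le.trans ?_)
  rw [zero_sub, abs_neg, sub_self, abs_zero] at hshift
  linarith [mul_le_mul_of_nonneg_left (hz1.trans hδα) hb]

lemma norm_polygonPath_sub_polygonPath_le (hz : |z.1| ≤ δ) (hT : α ≤ T) :
    ‖(polygonPath G u₀ l z T).1 - (polygonPath G u₀ l z (polygonEnd l z.1)).1‖ ≤
      2 * α * (T + 2) + 8 * b * α := by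
  have hb : 0 ≤ b := (norm_nonneg _).trans (hGb (0, 0, u₀))
  have hend' := abs_le.1 hend
  have hdefect := fun t ht => norm_polygonPath_sub_intervalIntegral_le_mul (u₀ := u₀) (t := t)
    hl hG hGb hmod hδ hδα hα hend hz ht
  have hdefT := hdefect T ⟨by linarith, by linarith⟩
  have hdefEnd := hdefect (polygonEnd l z.1) ⟨by linarith, by linarith⟩
  have hshift := norm_intervalIntegral_sub_intervalIntegral_le (intervalIntegrable_comp_path hG hGb
    (measurable_polygonPath G u₀ l z)) (fun r => hGb _) z.1 T z.1 (polygonEnd l z.1)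
  rw [sub_self, max_self] at hdefT
  rw [sub_self, abs_zero, abs_sub_comm] at hshift
  have hlate : max (polygonEnd l z.1 - T) 0 ≤ α := max_le hend'.2 (by linarith)
  have := mul_le_mul_of_nonneg_left hlate hb
  have := mul_le_mul_of_nonneg_left hend hb
  calc _ = ‖((polygonPath G u₀ l z T).1 - z.2 -
          ∫ r in z.1..T, G (r, polygonPath G u₀ l z r)) +
        -((polygonPath G u₀ l z (polygonEnd l z.1)).1 - z.2 -
          ∫ r in z.1..polygonEnd l z.1, G (r, polygonPath G u₀ l z r)) +
        ((∫ r in z.1..T, G (r, polygonPath G u₀ l z r)) -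
          ∫ r in z.1..polygonEnd l z.1, G (r, polygonPath G u₀ l z r))‖ := by congr 1; abel
    _ ≤ _ := norm_add₃_le.trans (by rw [norm_neg]; linarith)

omit hG hGb hmod in
lemma IsShakenPolygon.intervalIntegral_add_le {ℓ : ℝ × E × V → ℝ} (hℓ : Continuous ℓ)
    (hℓb : ∀ z, ‖ℓ z‖ ≤ b) (hmod : ∀ z z', dist z z' ≤ 2 * δ → dist (ℓ z) (ℓ z') ≤ α) (hκ : 0 ≤ κ)
    (hz : |z.1| ≤ δ)
    (hcost : shakenCost (spaceTimeField G) (fun z u => ℓ (z.1, z.2, u))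
      (fun z => Φ z.2 + κ * |z.1 - T|) l z ≤ C) :
    (∫ t in 0..T, ℓ (t, polygonPath G u₀ l z t)) +
        Φ (polygonPath G u₀ l z (polygonEnd l z.1)).1 ≤ C + α * (T + 2) + 2 * b * α := by
  have hb : 0 ≤ b := (norm_nonneg _).trans (hℓb (0, 0, u₀))
  have hpath := intervalIntegral_add_polygonPath_le (G := G) (u₀ := u₀) hℓ hℓb hmod
    (fun z => Φ z.2 + κ * |z.1 - T|) hl z
  have hshift := norm_intervalIntegral_sub_intervalIntegral_le (intervalIntegrable_comp_path hℓ hℓb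
    (measurable_polygonPath G u₀ l z)) (fun r => hℓb _) 0 T z.1 (polygonEnd l z.1)
  rw [Real.norm_eq_abs, sub_zero, abs_sub_comm T] at hshift
  have hlen : polygonEnd l z.1 - z.1 ≤ T + 2 := by linarith [(abs_le.1 hend).2, (abs_le.1 hz).1]
  have := mul_le_mul_of_nonneg_left hlen (hδ.trans hδα)
  have := mul_nonneg hκ (abs_nonneg (polygonEnd l z.1 - T))
  linarith [(abs_le.1 hshift).2, mul_le_mul_of_nonneg_left (hz.trans hδα) hb,
    mul_le_mul_of_nonneg_left hend hb]

end Estimates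

lemma eventually_dist_le_of_uniformContinuous {P Q : Type*} [PseudoMetricSpace P]
    [PseudoMetricSpace Q] {q : P → Q} (hq : UniformContinuous q) (hε : 0 < ε) :
    ∀ᶠ δ in nhdsWithin (0 : ℝ) (Ioi 0), ∀ z z', dist z z' ≤ 2 * δ → dist (q z) (q z') ≤ ε := by
  obtain ⟨η, hη, hηε⟩ := Metric.uniformContinuous_iff.1 hq ε hε
  filter_upwards [Ioo_mem_nhdsGT (half_pos hη)] with δ hδ z z' hz
  exact (hηε (by linarith [hδ.2])).le

section ExistsApproxTrajectory

variable [FiniteDimensional ℝ E] [MeasurableSpace E] [BorelSpace E]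
  [PseudoMetricSpace V] [SecondCountableTopology V] [MeasurableSpace V] [BorelSpace V] {c : ℝ}

theorem DualValueLE.exists_isApproxTrajectory_of_dist_le
    (hdual : DualValueLE {z | z.2.2 ∈ U} univ G ℓ Φ T x₀ C) (hU : U.Nonempty)
    (hG : Continuous G) (hGb : ∀ z, ‖G z‖ ≤ b) (hℓ : Continuous ℓ) (hℓb : ∀ z, ‖ℓ z‖ ≤ b)
    (hΦ : LipschitzWith L Φ) (hΦc : ∀ x, -c ≤ Φ x)
    (hGδ : ∀ z z', dist z z' ≤ 2 * δ → dist (G z) (G z') ≤ α)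
    (hℓδ : ∀ z z', dist z z' ≤ 2 * δ → dist (ℓ z) (ℓ z') ≤ α)
    (hδ : 0 < δ) (hδα : δ ≤ α) (hδκ : (L + κ) * δ < α) (hα : α ≤ 1) (hαT : α ≤ T)
    (hκ : b + 1 < κ) (hκα : C + 1 + c + (b + 1) * (T + 1) ≤ (κ - b - 1) * α) :
    ∃ x u, IsApproxTrajectory G U T x₀ (α * (T + 3) + 4 * b * α) x u ∧
      (∫ t in 0..T, ℓ (t, x t, u t)) + Φ (x T) ≤
        C + α + α * (T + 2) + 2 * b * α + L * (2 * α * (T + 2) + 8 * b * α) := by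
  obtain ⟨u₀, hu₀⟩ := hU
  have hb : 0 ≤ b := (norm_nonneg _).trans (hGb (0, 0, u₀))
  obtain ⟨z, hz, l, hl, hcost⟩ := hdual.exists_shakenPolygon hG hℓ hℓb hΦ hΦc hb
    (by linarith) hδ hδκ
  have hz1 : |z.1| ≤ δ := by simpa using (norm_fst_le _).trans hz
  have hcost' := (intervalIntegral_add_polygonPath_le (u₀ := u₀) hℓ hℓb hℓδ _ hl z).trans
    (add_le_add_left hcost.le _)
  have hend : |polygonEnd l z.1 - T| ≤ α := by
    refine le_of_mul_le_mul_left (le_trans ?_ hκα) (by linarith : 0 < κ - b - 1)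
    exact abs_sub_mul_le_of_cost_le (p := polygonPath G u₀ l z) (Φ := fun y => Φ y.1) hℓb hα
      (fun y => hΦc y.1) (hz1.trans (hδα.trans hα)) (hl.le_polygonEnd _)
      (by linarith)
  refine ⟨_, _, hl.isApproxTrajectory hG hGb hGδ hδ.le hδα hα hend hu₀ hz, ?_⟩
  have hrun := hl.intervalIntegral_add_le (G := G) (u₀ := u₀) hδ.le hδα hα hend hℓ hℓb hℓδ
    (by linarith) hz1 hcost.le
  have hfinal := norm_polygonPath_sub_polygonPath_le (u₀ := u₀) hl hG hGb hGδ hδ.le hδα hα hend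
    hz1 hαT
  have hlip := hΦ.dist_le_mul (polygonPath G u₀ l z T).1 (polygonPath G u₀ l z (polygonEnd l z.1)).1
  rw [Real.dist_eq, dist_eq_norm] at hlip
  linarith [(abs_le.1 hlip).2, mul_le_mul_of_nonneg_left hfinal L.coe_nonneg]

open scoped Topology in
theorem DualValueLE.exists_isApproxTrajectory
    (hdual : DualValueLE {z | z.2.2 ∈ U} univ G ℓ Φ T x₀ C) (hU : U.Nonempty) (hT : 0 < T)
    (hG : UniformContinuous G) (hGb : ∀ z, ‖G z‖ ≤ b) (hℓ : UniformContinuous ℓ)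
    (hℓb : ∀ z, ‖ℓ z‖ ≤ b) (hΦ : LipschitzWith L Φ) (hΦc : ∀ x, -c ≤ Φ x) (hε : 0 < ε) :
    ∃ x u, IsApproxTrajectory G U T x₀ ε x u ∧
      (∫ t in 0..T, ℓ (t, x t, u t)) + Φ (x T) ≤ C + ε := by
  have hb : 0 ≤ b := (norm_nonneg _).trans (hGb (0, 0, hU.some))
  have := L.coe_nonneg
  let A : ℝ := (T + 3 + 4 * b) * (1 + 2 * L)
  have hA : 0 < A := by positivity
  obtain ⟨α, hα1, hαT, hαA, hα⟩ : ∃ α, α ≤ 1 ∧ α ≤ T ∧ α * A ≤ ε ∧ 0 < α :=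
    ⟨min (min 1 T) (ε / A), (min_le_left _ _).trans (min_le_left _ _),
      (min_le_left _ _).trans (min_le_right _ _), (le_div_iff₀ hA).1 (min_le_right _ _),
      by positivity⟩
  obtain ⟨κ, hκ, hκα⟩ : ∃ κ, b + 1 < κ ∧ C + 1 + c + (b + 1) * (T + 1) ≤ (κ - b - 1) * α := by
    refine ⟨max (b + 2) (b + 1 + (C + 1 + c + (b + 1) * (T + 1)) / α), ?_, ?_⟩
    · exact lt_max_of_lt_left (by linarith)
    · rw [← div_le_iff₀ hα]
      linarith [le_max_right (b + 2) (b + 1 + (C + 1 + c + (b + 1) * (T + 1)) / α)]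
  have hLκ : 0 < L + κ := by linarith
  obtain ⟨δ, hGδ, hℓδ, ⟨-, hδα⟩, ⟨hδ, hδκ⟩⟩ := ((eventually_dist_le_of_uniformContinuous hG hα).and
    ((eventually_dist_le_of_uniformContinuous hℓ hα).and (Filter.Eventually.and
      (Ioo_mem_nhdsGT hα) (Ioo_mem_nhdsGT (div_pos hα hLκ))))).exists
  obtain ⟨x, u, hxu, hcost⟩ := hdual.exists_isApproxTrajectory_of_dist_le hU hG.continuous hGb
    hℓ.continuous hℓb hΦ hΦc hGδ hℓδ hδ hδα.le ((lt_div_iff₀' hLκ).1 hδκ) hα1 hαT hκ hκα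
  have : 0 ≤ α * (T + 3 + 4 * b) * (2 * L) := by positivity
  have : 0 ≤ α * (b + L) := by positivity
  refine ⟨x, u, hxu.mono (le_trans ?_ hαA), hcost.trans (le_trans ?_ (add_le_add_right hαA C))⟩
  · simp only [A]; linarith
  · simp only [A]; linarith

end ExistsApproxTrajectory

end Duality

section LipschitzPaths

open scoped Topology

variable {F : Type*} [NormedAddCommGroup F] {K : NNReal}

theorem exists_subseq_tendstoUniformlyOn_Icc_of_lipschitzWith [ProperSpace F] {f : ℕ → ℝ → F}
    {T B : ℝ} (hT : 0 ≤ T) (hf : ∀ k, LipschitzWith K (f k)) (hB : ∀ k, ‖f k 0‖ ≤ B) :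
    ∃ (σ : ℕ → ℕ) (g : ℝ → F), StrictMono σ ∧ LipschitzWith K g ∧
      TendstoUniformlyOn (fun k => f (σ k)) g Filter.atTop (Icc 0 T) := by
  let fb : ℕ → BoundedContinuousFunction (Icc 0 T) F := fun k =>
    .mkOfCompact ⟨fun s => f k s, (hf k).continuous.comp continuous_subtype_val⟩
  let A : Set (BoundedContinuousFunction (Icc 0 T) F) :=
    {φ | LipschitzWith K φ} ∩ {φ | ∀ s, φ s ∈ Metric.closedBall 0 (B + K * T)}
  have hAclosed : IsClosed A := by
    simp only [A, lipschitzWith_iff_dist_le_mul, Set.ofPred_forall]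
    refine .inter (isClosed_iInter fun s => isClosed_iInter fun t => ?_)
      (isClosed_iInter fun s => ?_)
    · exact isClosed_le (by fun_prop) continuous_const
    · exact Metric.isClosed_closedBall.preimage (by fun_prop)
  have hA : IsCompact A := BoundedContinuousFunction.arzela_ascoli₂ _
    (isCompact_closedBall 0 (B + K * T)) A hAclosed (fun φ s hφ => hφ.2 s)
    (LipschitzWith.uniformEquicontinuous _ K fun φ => φ.2.1).equicontinuous
  have hfA : ∀ k, fb k ∈ A := fun k => by
    refine ⟨(hf k).comp (LipschitzWith.subtype_val _) |>.weaken (by simp),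
      fun s => mem_closedBall_zero_iff.2 ?_⟩
    have hdist := (hf k).norm_sub_le s 0
    rw [sub_zero, Real.norm_of_nonneg s.2.1] at hdist
    have := mul_le_mul_of_nonneg_left s.2.2 K.coe_nonneg
    have := norm_le_norm_add_norm_sub' (f k s) (f k 0)
    exact this.trans (by linarith [hB k])
  obtain ⟨φ, hφ, σ, hσ, hlim⟩ := hA.tendsto_subseq hfA
  refine ⟨σ, IccExtend hT φ, hσ, ?_, tendstoUniformlyOn_iff_tendstoUniformly_comp_coe.2 ?_⟩
  · simpa only [IccExtend, mul_one] using hφ.1.comp (LipschitzWith.projIcc hT)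
  · simp only [Function.comp_def, IccExtend_val]
    exact BoundedContinuousFunction.tendsto_iff_tendstoUniformly.1 hlim

variable [NormedSpace ℝ F]

lemma lipschitzWith_add_intervalIntegral {φ : ℝ → F}
    (hφ : ∀ s t, IntervalIntegrable φ volume s t) (hφK : ∀ t, ‖φ t‖ ≤ K) (c : F) (a : ℝ) :
    LipschitzWith K fun t => c + ∫ s in a..t, φ s := by
  refine LipschitzWith.of_dist_le_mul fun s t => ?_
  rw [dist_add_left, dist_eq_norm, Real.dist_eq]
  simpa using norm_intervalIntegral_sub_intervalIntegral_le hφ hφK a s a t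

lemma intervalIntegral_eq_sub_of_ae_hasDerivAt [CompleteSpace F] {K' : NNReal}
    {f f' : ℝ → F} {a b : ℝ} (hf : LipschitzWith K f)
    (hf' : ∀ s t, IntervalIntegrable f' volume s t) (hf'K : ∀ t, ‖f' t‖ ≤ K')
    (hderiv : ∀ᵐ t, t ∈ uIcc a b → HasDerivAt f (f' t) t) :
    ∫ t in a..b, f' t = f b - f a := by
  have hprim := lipschitzWith_add_intervalIntegral hf' hf'K (f a) a
  have hac := (hf.sub hprim).lipschitzOnWith (s := uIcc a b) |>.absolutelyContinuousOnInterval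
  obtain ⟨C, hC⟩ := hac.const_of_ae_hasDerivAt_zero (by
    filter_upwards [hderiv, (hf' a b).ae_hasDerivAt_integral] with t h₁ h₂ ht
    simpa using (h₁ ht).fun_sub ((h₂ ht a left_mem_uIcc).const_add (f a)))
  have ha := hC a left_mem_uIcc
  have hb := hC b right_mem_uIcc
  rw [intervalIntegral.integral_same, add_zero, sub_self] at ha
  rwa [← ha, sub_eq_zero, eq_comm, ← eq_sub_iff_add_eq'] at hb

end LipschitzPaths

section RelaxedCompactness

open Filter
open scoped Topology

lemma map_inv_smul_intervalIntegral_le {V : Type*} [NormedAddCommGroup V] [NormedSpace ℝ V]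
    [CompleteSpace V] {U : Set V} {p : V → ℝ} {φ : ℝ → ℝ} {w : ℝ → V} {a b : ℝ}
    (hp : ConvexOn ℝ U p) (hpc : ContinuousOn p U) (hU : IsClosed U) (hab : a < b)
    (hwU : ∀ t, w t ∈ U) (hw : IntervalIntegrable w volume a b)
    (hpw : IntervalIntegrable (fun t => p (w t)) volume a b)
    (hφ : IntervalIntegrable φ volume a b) (hle : ∀ t ∈ Icc a b, p (w t) ≤ φ t) :
    p ((b - a)⁻¹ • ∫ t in a..b, w t) ≤ (b - a)⁻¹ * ∫ t in a..b, φ t := by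
  have hjensen : p (⨍ t in a..b, w t) ≤ ⨍ t in a..b, p (w t) := by
    rw [uIoc_of_le hab.le]
    exact hp.map_set_average_le hpc hU (by simp [hab]) (by simp) (.of_forall hwU)
      ((intervalIntegrable_iff_integrableOn_Ioc_of_le hab.le).1 hw)
      ((intervalIntegrable_iff_integrableOn_Ioc_of_le hab.le).1 hpw)
  rw [interval_average_eq, interval_average_eq, smul_eq_mul] at hjensen
  exact hjensen.trans <| mul_le_mul_of_nonneg_left
    (intervalIntegral.integral_mono_on hab.le hpw hφ hle) (inv_nonneg.2 (sub_nonneg.2 hab.le))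

lemma inv_smul_intervalIntegral_mem {V : Type*} [NormedAddCommGroup V] [NormedSpace ℝ V]
    [CompleteSpace V] {U : Set V} {w : ℝ → V} {a b : ℝ} (hUc : Convex ℝ U) (hU : IsClosed U)
    (hab : a < b) (hwU : ∀ t, w t ∈ U) (hw : IntervalIntegrable w volume a b) :
    (b - a)⁻¹ • ∫ t in a..b, w t ∈ U := by
  rw [← interval_average_eq, uIoc_of_le hab.le]
  exact hUc.set_average_mem hU (by simp [hab]) (by simp) (.of_forall hwU)
    ((intervalIntegrable_iff_integrableOn_Ioc_of_le hab.le).1 hw)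

lemma exists_eventually_abs_sub_lt_of_tendstoUniformlyOn {E V : Type*} [PseudoMetricSpace E]
    [PseudoMetricSpace V] {q : ℝ × E × V → ℝ} (hq : UniformContinuous q) {y : ℕ → ℝ → E}
    {x : ℝ → E} {S : Set ℝ}
    (hy : TendstoUniformlyOn y x atTop S) {t ε : ℝ} (hx : ContinuousAt x t) (hε : 0 < ε) :
    ∃ δ > 0, ∀ᶠ k in atTop, ∀ s ∈ S, |s - t| < δ → ∀ v,
      |q (t, x t, v) - q (s, y k s, v)| < ε := by
  obtain ⟨η, hη, hqη⟩ := Metric.uniformContinuous_iff.1 hq ε hε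
  obtain ⟨δ, hδ, hxδ⟩ := Metric.continuousAt_iff.1 hx (η / 2) (half_pos hη)
  refine ⟨min δ η, lt_min hδ hη, ?_⟩
  filter_upwards [Metric.tendstoUniformlyOn_iff.1 hy (η / 2) (half_pos hη)] with k hk s hs hst v
  refine hqη (max_lt ?_ (max_lt ?_ (by simpa)))
  · simpa [Real.dist_eq, abs_sub_comm] using hst.trans_le (min_le_right _ _)
  · linarith [dist_triangle_left (x t) (y k s) (x s), hk s hs,
      hxδ (hst.trans_le (min_le_left _ _))]

variable {E V : Type*} {U : Set V} {T b : ℝ} {q : ℝ × E × V → ℝ} {y : ℕ → ℝ → E}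
  {w : ℕ → ℝ → V} {x : ℝ → E} {u : ℝ → V}

section Integrability

variable [MeasurableSpace E] [MeasurableSpace V]

lemma IsControlledPath.intervalIntegrable_control [NormedAddCommGroup V] [OpensMeasurableSpace V]
    [SecondCountableTopology V] (h : IsControlledPath U x u) (hU : Bornology.IsBounded U)
    (s t : ℝ) : IntervalIntegrable u volume s t := by
  obtain ⟨R, hR⟩ := hU.exists_norm_le
  exact (intervalIntegrable_const (c := R)).mono_fun h.measurable_control.aestronglyMeasurable
    (.of_forall fun t => (hR _ (h.control_mem t)).trans (le_abs_self R))

lemma IsControlledPath.intervalIntegrable_comp [TopologicalSpace E] [BorelSpace E]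
    [SecondCountableTopology E] [TopologicalSpace V] [BorelSpace V] [SecondCountableTopology V]
    {F : Type*} [NormedAddCommGroup F] {q : ℝ × E × V → F} (h : IsControlledPath U x u)
    (hq : Continuous q) (hqb : ∀ z, ‖q z‖ ≤ b) (s t : ℝ) :
    IntervalIntegrable (fun r => q (r, x r, u r)) volume s t :=
  intervalIntegrable_comp_path hq hqb (h.measurable_state.prodMk h.measurable_control) s t

end Integrability

variable [NormedAddCommGroup E] [NormedAddCommGroup V] [NormedSpace ℝ V]

/-- Convergence on `[0, T]` of states `y k` and controls `w k` to `x` and `u`: uniform for the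
states, and weak for the controls, in the sense that their primitives converge. -/
structure TendstoTrajectory (T : ℝ) (y : ℕ → ℝ → E) (w : ℕ → ℝ → V) (x : ℝ → E) (u : ℝ → V) :
    Prop where
  tendstoUniformlyOn_state : TendstoUniformlyOn y x atTop (Icc 0 T)
  tendsto_control : ∀ t ∈ Icc 0 T,
    Tendsto (fun k => ∫ s in 0..t, w k s) atTop (𝓝 (∫ s in 0..t, u s))

lemma TendstoTrajectory.mono {T' : ℝ} (h : TendstoTrajectory T y w x u) (hT : T' ≤ T) :
    TendstoTrajectory T' y w x u where
  tendstoUniformlyOn_state := h.tendstoUniformlyOn_state.mono (Icc_subset_Icc_right hT)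
  tendsto_control t ht := h.tendsto_control t (Icc_subset_Icc_right hT ht)

variable [MeasurableSpace E] [BorelSpace E] [SecondCountableTopology E] [CompleteSpace V]
  [MeasurableSpace V] [BorelSpace V] [SecondCountableTopology V]

lemma le_of_hasDerivAt_of_tendsto_intervalIntegral {W : ℝ → V} {c : ℝ → ℝ} {t c' : ℝ} {a : V}
    (hq : UniformContinuous q) (hqb : ∀ z, ‖q z‖ ≤ b)
    (hqc : ConvexOn ℝ U fun v => q (t, x t, v)) (hU : IsCompact U)
    (hyw : ∀ k, IsControlledPath U (y k) (w k)) (hy : TendstoUniformlyOn y x atTop (Icc 0 T))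
    (hx : ContinuousAt x t) (ht : t ∈ Ioo 0 T)
    (hW : ∀ s ∈ Icc 0 T, Tendsto (fun k => ∫ r in 0..s, w k r) atTop (𝓝 (W s)))
    (hc : ∀ s ∈ Icc 0 T, Tendsto (fun k => ∫ r in 0..s, q (r, y k r, w k r)) atTop (𝓝 (c s)))
    (hWt : HasDerivAt W a t) (hct : HasDerivAt c c' t) : q (t, x t, a) ≤ c' := by
  have hqt : Continuous fun v => q (t, x t, v) := hq.continuous.comp (by fun_prop)
  have hw := fun k => (hyw k).intervalIntegrable_control hU.isBounded
  have hqyw := fun k => (hyw k).intervalIntegrable_comp hq.continuous hqb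
  refine le_of_forall_pos_le_add fun ε hε => ?_
  obtain ⟨δ, hδ, hunif⟩ := exists_eventually_abs_sub_lt_of_tendstoUniformlyOn hq hy hx hε
  refine le_of_tendsto_of_tendsto ((hqt.tendsto _).comp hWt.tendsto_slope_zero_right)
    (hct.tendsto_slope_zero_right.add_const ε) ?_
  filter_upwards [Ioo_mem_nhdsGT (lt_min hδ (sub_pos.2 ht.2))] with τ hτ
  obtain ⟨hτδ, hτT⟩ := lt_min_iff.1 hτ.2
  have htτ : t + τ ∈ Icc 0 T := ⟨by linarith [ht.1, hτ.1], by linarith⟩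
  have htT := Ioo_subset_Icc_self ht
  refine le_of_tendsto_of_tendsto
    ((hqt.tendsto _).comp (((hW _ htτ).sub (hW _ htT)).const_smul τ⁻¹))
    ((((hc _ htτ).sub (hc _ htT)).const_smul τ⁻¹).add_const ε) ?_
  filter_upwards [hunif] with k hk
  have hjensen := map_inv_smul_intervalIntegral_le hqc hqt.continuousOn hU.isClosed
    (lt_add_of_pos_right t hτ.1) (hyw k).control_mem (hw k _ _)
    (intervalIntegrable_comp_path (q := fun z : ℝ × V => q (t, x t, z.2))
      (hqt.comp continuous_snd) (fun _ => hqb _) (hyw k).measurable_control _ _)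
    ((hqyw k _ _).add (intervalIntegrable_const (c := ε))) fun s hs => by
      have hclose := hk s ⟨by linarith [ht.1, hs.1], by linarith [hs.2]⟩
        (abs_lt.2 ⟨by linarith [hs.1], by linarith [hs.2]⟩) (w k s)
      linarith [(abs_lt.1 hclose).2]
  rw [intervalIntegral.integral_add (hqyw k _ _) intervalIntegrable_const,
    intervalIntegral.integral_const, add_sub_cancel_left, mul_add, smul_eq_mul,
    inv_mul_cancel_left₀ hτ.1.ne'] at hjensen
  simpa only [Function.comp_apply, smul_eq_mul,
    intervalIntegral.integral_interval_sub_left (hw k _ _) (hw k _ _),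
    intervalIntegral.integral_interval_sub_left (hqyw k _ _) (hqyw k _ _)] using hjensen

/-- Tonelli's lower semicontinuity theorem. -/
theorem TendstoTrajectory.intervalIntegral_le {C : ℕ → ℝ} {C₀ : ℝ}
    (h : TendstoTrajectory T y w x u) (hT : 0 ≤ T) (hU : IsCompact U)
    (hyw : ∀ k, IsControlledPath U (y k) (w k)) (hxu : IsControlledPath U x u) (hx : Continuous x)
    (hq : UniformContinuous q) (hqb : ∀ z, ‖q z‖ ≤ b)
    (hqc : ∀ t x, ConvexOn ℝ U fun v => q (t, x, v)) (hC : Tendsto C atTop (𝓝 C₀))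
    (hle : ∀ k, ∫ t in 0..T, q (t, y k t, w k t) ≤ C k) :
    ∫ t in 0..T, q (t, x t, u t) ≤ C₀ := by
  have hb : 0 ≤ b := (norm_nonneg _).trans (hqb (0, 0, 0))
  lift b to NNReal using hb
  obtain ⟨σ, c, hσ, hclip, hc⟩ := exists_subseq_tendstoUniformlyOn_Icc_of_lipschitzWith (B := 0) hT
    (fun k => lipschitzWith_add_intervalIntegral
      ((hyw k).intervalIntegrable_comp hq.continuous hqb) (fun _ => hqb _) 0 0) fun k => by simp
  simp only [zero_add] at hc
  have hcT : c T ≤ C₀ := le_of_tendsto_of_tendsto' (hc.tendsto_at (right_mem_Icc.2 hT))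
    (hC.comp hσ.tendsto_atTop) fun k => hle (σ k)
  have hc0 : c 0 = 0 := tendsto_nhds_unique (hc.tendsto_at (left_mem_Icc.2 hT)) (by simp)
  have hac := hclip.lipschitzOnWith (s := uIcc 0 T) |>.absolutelyContinuousOnInterval
  have hderiv : ∀ᵐ t ∂volume.restrict (Icc 0 T), q (t, x t, u t) ≤ deriv c t := by
    rw [← Measure.restrict_congr_set Ioo_ae_eq_Icc, ae_restrict_iff' measurableSet_Ioo]
    filter_upwards [hclip.ae_differentiableAt_real,
      (hxu.intervalIntegrable_control hU.isBounded 0 T).ae_hasDerivAt_integral] with t hct hut ht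
    exact le_of_hasDerivAt_of_tendsto_intervalIntegral hq hqb (hqc _ _) hU (fun k => hyw (σ k))
      (fun r hr => hσ.tendsto_atTop.eventually (h.tendstoUniformlyOn_state r hr)) hx.continuousAt ht
      (fun s hs => (h.tendsto_control s hs).comp hσ.tendsto_atTop) (fun s => hc.tendsto_at)
      (hut (Icc_subset_uIcc (Ioo_subset_Icc_self ht)) 0 left_mem_uIcc) hct.hasDerivAt
  calc ∫ t in 0..T, q (t, x t, u t)
      ≤ ∫ t in 0..T, deriv c t := intervalIntegral.integral_mono_ae_restrict hT
        (hxu.intervalIntegrable_comp hq.continuous hqb 0 T) hac.intervalIntegrable_deriv hderiv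
    _ = c T := by rw [hac.integral_deriv_eq_sub, hc0, sub_zero]
    _ ≤ C₀ := hcT

end RelaxedCompactness

section LimitTrajectory

open Filter
open scoped Topology

variable {E V : Type*} [NormedAddCommGroup E] [NormedAddCommGroup V] [NormedSpace ℝ V]
  {U : Set V} {T b : ℝ}

lemma mem_of_hasDerivAt_of_tendsto_intervalIntegral [CompleteSpace V] {w : ℕ → ℝ → V} {W : ℝ → V}
    {t : ℝ} {a : V} (hU : IsClosed U) (hUc : Convex ℝ U) (hwU : ∀ k t, w k t ∈ U)
    (hw : ∀ k s t, IntervalIntegrable (w k) volume s t) (ht : t ∈ Ioo 0 T)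
    (hW : ∀ s ∈ Icc 0 T, Tendsto (fun k => ∫ r in 0..s, w k r) atTop (𝓝 (W s)))
    (hWt : HasDerivAt W a t) : a ∈ U := by
  refine hU.mem_of_tendsto hWt.tendsto_slope_zero_right ?_
  filter_upwards [Ioo_mem_nhdsGT (sub_pos.2 ht.2)] with τ hτ
  refine hU.mem_of_tendsto (((hW (t + τ) ⟨by linarith [ht.1, hτ.1], by linarith [hτ.2]⟩).sub
    (hW t (Ioo_subset_Icc_self ht))).const_smul τ⁻¹) (.of_forall fun k => ?_)
  simpa [intervalIntegral.integral_interval_sub_left (hw k _ _) (hw k _ _)] using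
    inv_smul_intervalIntegral_mem hUc hU (lt_add_of_pos_right t hτ.1) (hwU k) (hw k _ _)

lemma exists_control_of_tendsto_intervalIntegral [FiniteDimensional ℝ V]
    [MeasurableSpace V] [BorelSpace V] {w : ℕ → ℝ → V}
    {W : ℝ → V} {K : NNReal} (hT : 0 ≤ T) (hU : IsCompact U) (hUc : Convex ℝ U) (hUn : U.Nonempty)
    (hwU : ∀ k t, w k t ∈ U) (hw : ∀ k s t, IntervalIntegrable (w k) volume s t)
    (hW : ∀ s ∈ Icc 0 T, Tendsto (fun k => ∫ r in 0..s, w k r) atTop (𝓝 (W s)))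
    (hWK : LipschitzWith K W) :
    ∃ u : ℝ → V, Measurable u ∧ (∀ t, u t ∈ U) ∧ ∀ t ∈ Icc 0 T, ∫ s in 0..t, u s = W t := by
  classical
  have := FiniteDimensional.complete ℝ V
  obtain ⟨u₀, hu₀⟩ := hUn
  obtain ⟨R, hR⟩ := hU.isBounded.exists_norm_le
  let u : ℝ → V := fun t => if deriv W t ∈ U then deriv W t else u₀
  have hu : Measurable u := Measurable.ite ((measurable_deriv W) hU.measurableSet)
    (measurable_deriv W) measurable_const
  have huU : ∀ t, u t ∈ U := fun t => by simp only [u]; split_ifs with h <;> assumption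
  have hui : ∀ s t, IntervalIntegrable u volume s t := fun s t =>
    (intervalIntegrable_const (c := R)).mono_fun hu.aestronglyMeasurable
      (.of_forall fun t => (hR _ (huU t)).trans (le_abs_self R))
  have hderiv : ∀ᵐ t, t ∈ Ioo 0 T → HasDerivAt W (u t) t := by
    filter_upwards [hWK.ae_differentiableAt_real] with t hWt ht
    have hmem := mem_of_hasDerivAt_of_tendsto_intervalIntegral hU.isClosed hUc hwU hw ht hW
      hWt.hasDerivAt
    simpa [u, hmem] using hWt.hasDerivAt
  have hW0 : W 0 = 0 := tendsto_nhds_unique (hW 0 (left_mem_Icc.2 hT)) (by simp)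
  refine ⟨u, hu, huU, fun t ht => ?_⟩
  rw [intervalIntegral_eq_sub_of_ae_hasDerivAt (K' := R.toNNReal) hWK hui
    (fun t => (hR _ (huU t)).trans R.le_coe_toNNReal), hW0, sub_zero]
  rw [uIcc_of_le ht.1]
  filter_upwards [hderiv, Ioo_ae_eq_Icc.mem_iff] with s hs hmem hst
  exact hs (Ioo_subset_Ioo_right ht.2 (hmem.2 hst))

variable [NormedSpace ℝ E] [MeasurableSpace E] [BorelSpace E] [MeasurableSpace V] [BorelSpace V]
  {G : ℝ × E × V → E} {x₀ : E} {ε : ℕ → ℝ} {y : ℕ → ℝ → E} {w : ℕ → ℝ → V} {x : ℝ → E} {u : ℝ → V}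

section Closedness

variable [CompleteSpace E] [SecondCountableTopology E] [CompleteSpace V]
  [SecondCountableTopology V]

lemma TendstoTrajectory.intervalIntegral_eq {q : ℝ × E × V → E} {c : E}
    (h : TendstoTrajectory T y w x u) (hT : 0 ≤ T) (hU : IsCompact U) (hUc : Convex ℝ U)
    (hyw : ∀ k, IsControlledPath U (y k) (w k)) (hxu : IsControlledPath U x u) (hx : Continuous x)
    (hq : UniformContinuous q) (hqb : ∀ z, ‖q z‖ ≤ b)
    (hqaff : ∀ t x, ∃ A : V →ᵃ[ℝ] E, ∀ v ∈ U, q (t, x, v) = A v)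
    (hc : Tendsto (fun k => ∫ t in 0..T, q (t, y k t, w k t)) atTop (𝓝 c)) :
    ∫ t in 0..T, q (t, x t, u t) = c := by
  have hle : ∀ φ : E →L[ℝ] ℝ, φ (∫ t in 0..T, q (t, x t, u t)) ≤ φ c := fun φ => by
    rw [← φ.intervalIntegral_comp_comm (hxu.intervalIntegrable_comp hq.continuous hqb 0 T)]
    refine h.intervalIntegral_le hT hU hyw hxu hx (q := fun z => φ (q z))
      (φ.uniformContinuous.comp hq) (fun z => φ.le_opNorm_of_le (hqb z)) (fun t x => ?_)
      ((φ.continuous.tendsto c).comp hc) fun k =>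
        (φ.intervalIntegral_comp_comm ((hyw k).intervalIntegrable_comp hq.continuous hqb 0 T)).le
    obtain ⟨A, hA⟩ := hqaff t x
    refine ⟨hUc, fun v hv v' hv' a a' ha ha' haa' => ?_⟩
    simp only [hA _ hv, hA _ hv', hA _ (hUc hv hv' ha ha' haa'),
      Convex.combo_affine_apply haa', map_add, map_smul, le_refl]
  refine (SeparatingDual.eq_iff_forall_dual_eq (R := ℝ)).2 fun φ => (hle φ).antisymm ?_
  simpa using hle (-φ)

theorem TendstoTrajectory.isApproxTrajectory (h : TendstoTrajectory T y w x u) (hU : IsCompact U)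
    (hUc : Convex ℝ U) (hyw : ∀ k, IsApproxTrajectory G U T x₀ (ε k) (y k) (w k))
    (hxu : IsControlledPath U x u) (hx : Continuous x) (hG : UniformContinuous G)
    (hGb : ∀ z, ‖G z‖ ≤ b) (hGaff : ∀ t x, ∃ A : V →ᵃ[ℝ] E, ∀ v ∈ U, G (t, x, v) = A v)
    (hε : Tendsto ε atTop (𝓝 0)) : IsApproxTrajectory G U T x₀ 0 x u := by
  refine ⟨hxu, fun t ht => ?_⟩
  have herr : Tendsto (fun k => y k t - x₀ - ∫ s in 0..t, G (s, y k s, w k s)) atTop (𝓝 0) :=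
    squeeze_zero_norm (fun k => (hyw k).norm_sub_integral_le t ht) hε
  have hint : Tendsto (fun k => ∫ s in 0..t, G (s, y k s, w k s)) atTop (𝓝 (x t - x₀)) := by
    simpa using ((h.tendstoUniformlyOn_state.tendsto_at ht).sub_const x₀).sub herr
  rw [(h.mono ht.2).intervalIntegral_eq ht.1 hU hUc (fun k => (hyw k).toIsControlledPath) hxu hx
    hG hGb hGaff hint, sub_self, norm_zero]

end Closedness

theorem exists_subseq_tendstoTrajectory [FiniteDimensional ℝ E] [FiniteDimensional ℝ V]
    (hT : 0 ≤ T) (hU : IsCompact U) (hUc : Convex ℝ U) (hUn : U.Nonempty) (hG : Continuous G)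
    (hGb : ∀ z, ‖G z‖ ≤ b) (hyw : ∀ k, IsApproxTrajectory G U T x₀ (ε k) (y k) (w k))
    (hε : Tendsto ε atTop (𝓝 0)) :
    ∃ (σ : ℕ → ℕ) (x : ℝ → E) (u : ℝ → V), StrictMono σ ∧ Continuous x ∧ IsControlledPath U x u ∧
      TendstoTrajectory T (fun k => y (σ k)) (fun k => w (σ k)) x u := by
  have := FiniteDimensional.proper_real E
  have := FiniteDimensional.proper_real V
  obtain ⟨R, hR⟩ := hU.isBounded.exists_norm_le
  have hwi := fun k => (hyw k).intervalIntegrable_control hU.isBounded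
  obtain ⟨σ, P, hσ, hPlip, hP⟩ := exists_subseq_tendstoUniformlyOn_Icc_of_lipschitzWith hT
    (fun k => (lipschitzWith_add_intervalIntegral (K := b.toNNReal)
        ((hyw k).intervalIntegrable_comp hG hGb) (fun _ => (hGb _).trans b.le_coe_toNNReal)
        x₀ 0).prodMk
      (lipschitzWith_add_intervalIntegral (K := R.toNNReal) (hwi k)
        (fun t => (hR _ ((hyw k).control_mem t)).trans R.le_coe_toNNReal) 0 0))
    (B := ‖x₀‖) fun k => by simp
  have hP₂ : ∀ t ∈ Icc 0 T, Tendsto (fun k => ∫ s in 0..t, w (σ k) s) atTop (𝓝 (P t).2) :=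
    fun t ht => by
      simpa [Function.comp_def] using (continuous_snd.tendsto _).comp (hP.tendsto_at ht)
  obtain ⟨u, hu, huU, hui⟩ := exists_control_of_tendsto_intervalIntegral hT hU hUc hUn
    (fun k => (hyw (σ k)).control_mem) (fun k => hwi (σ k)) hP₂
    (LipschitzWith.prod_snd.comp hPlip)
  have hx : Continuous fun t => (P t).1 := continuous_fst.comp hPlip.continuous
  refine ⟨σ, _, u, hσ, hx, ⟨hx.measurable, hu, huU⟩, Metric.tendstoUniformlyOn_iff.2 fun r hr => ?_,
    fun t ht => (hui t ht).symm ▸ hP₂ t ht⟩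
  filter_upwards [Metric.tendstoUniformlyOn_iff.1 hP (r / 2) (half_pos hr),
    (hε.comp hσ.tendsto_atTop).eventually_lt_const (half_pos hr)] with k hk hεk t ht
  have herr := (hyw (σ k)).norm_sub_integral_le t ht
  rw [sub_sub, ← dist_eq_norm] at herr
  linarith [dist_triangle_right (P t).1 (y (σ k) t) (x₀ + ∫ s in 0..t, G (s, y (σ k) s, w (σ k) s)),
    (le_max_left _ _).trans_lt (hk t ht), show ε (σ k) < r / 2 from hεk]

end LimitTrajectory

section ExactTrajectory

open Filter
open scoped Topology

lemma exists_lipschitzWith_penalty {E : Type*} [PseudoMetricSpace E] {K : Set E} {H : E → ℝ}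
    (hK : IsCompact K) (hKn : K.Nonempty) (hH : ContinuousOn H K) (N : NNReal) :
    ∃ p : E → E, (∀ x, p x ∈ K) ∧ LipschitzWith N (fun x => H (p x) + N * dist x (p x)) ∧
      ∀ x ∈ K, H (p x) + N * dist x (p x) ≤ H x := by
  have hmin : ∀ x, ∃ y ∈ K, IsMinOn (fun y => H y + N * dist x y) K y := fun x =>
    hK.exists_isMinOn hKn (hH.add (by fun_prop))
  choose p hpK hpmin using hmin
  refine ⟨p, hpK, .of_le_add_mul _ fun x y => ?_, fun x hx => by simpa using hpmin x hx⟩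
  have hle : H (p x) + N * dist x (p x) ≤ H (p y) + N * dist x (p y) := hpmin x (hpK y)
  nlinarith [dist_triangle x y (p y), N.coe_nonneg]

/-- The distance to `X`, truncated at `1`: a bounded penalty for leaving `X`. -/
def truncInfDist {E : Type*} [PseudoMetricSpace E] (X : Set E) (x : E) : ℝ :=
  min (Metric.infDist x X) 1

section TruncInfDist

variable {E : Type*} [PseudoMetricSpace E] {X : Set E}

lemma truncInfDist_nonneg (x : E) : 0 ≤ truncInfDist X x :=
  le_min Metric.infDist_nonneg zero_le_one

lemma uniformContinuous_truncInfDist : UniformContinuous (truncInfDist X) :=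
  ((Metric.lipschitz_infDist_pt X).min_const 1).uniformContinuous

lemma uniformContinuous_truncInfDist_state {V : Type*} [PseudoMetricSpace V] :
    UniformContinuous fun z : ℝ × E × V => truncInfDist X z.2.1 :=
  uniformContinuous_truncInfDist.comp (uniformContinuous_fst.comp uniformContinuous_snd)

lemma norm_truncInfDist_le (x : E) : ‖truncInfDist X x‖ ≤ 1 := by
  rw [Real.norm_of_nonneg (truncInfDist_nonneg x)]
  exact min_le_right _ _

lemma truncInfDist_eq_zero_iff (hX : IsClosed X) (hXn : X.Nonempty) {x : E} :
    truncInfDist X x = 0 ↔ x ∈ X := by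
  rw [hX.mem_iff_infDist_zero hXn, truncInfDist, min_eq_iff]
  constructor
  · rintro (h | h) <;> linarith [h.1, h.2]
  · exact fun h => .inl ⟨h, h ▸ zero_le_one⟩

end TruncInfDist

/-- Control problems with a compact convex set `U` of controls and uniformly continuous data
bounded by `b`: the dynamics `G` is affine and the running cost `ℓ` is convex in the control. -/
structure IsConvexControlProblem {E V : Type*} [NormedAddCommGroup E] [NormedSpace ℝ E]
    [NormedAddCommGroup V] [NormedSpace ℝ V] (U : Set V) (G : ℝ × E × V → E) (ℓ : ℝ × E × V → ℝ)
    (b : ℝ) : Prop where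
  isCompact : IsCompact U
  convex : Convex ℝ U
  nonempty : U.Nonempty
  uniformContinuous_field : UniformContinuous G
  norm_field_le : ∀ z, ‖G z‖ ≤ b
  field_affine : ∀ t x, ∃ A : V →ᵃ[ℝ] E, ∀ v ∈ U, G (t, x, v) = A v
  uniformContinuous_cost : UniformContinuous ℓ
  norm_cost_le : ∀ z, ‖ℓ z‖ ≤ b
  cost_convex : ∀ t x, ConvexOn ℝ U fun v => ℓ (t, x, v)

variable {E V : Type*} [NormedAddCommGroup E] [NormedSpace ℝ E] [NormedAddCommGroup V]
  [NormedSpace ℝ V] {X K : Set E} {U : Set V} {G : ℝ × E × V → E} {ℓ : ℝ × E × V → ℝ}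
  {Φ : E → ℝ} {T b c C : ℝ} {x₀ : E}

lemma IsConvexControlProblem.add_penalty (h : IsConvexControlProblem U G ℓ b) (N : NNReal) :
    IsConvexControlProblem U G (fun z => ℓ z + N * truncInfDist X z.2.1) (b + N) where
  __ := h
  norm_field_le z := (h.norm_field_le z).trans (le_add_of_nonneg_right N.2)
  uniformContinuous_cost :=
    h.uniformContinuous_cost.add (uniformContinuous_truncInfDist_state.const_mul' (N : ℝ))
  norm_cost_le z := norm_add_le_of_le (h.norm_cost_le z) <| by
    simpa using mul_le_mul_of_nonneg_left (norm_truncInfDist_le z.2.1) N.2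
  cost_convex t x := (h.cost_convex t x).add (convexOn_const (N * truncInfDist X x) h.convex)

/-- Exact trajectories on `[0, T]` that stay in `X` and end in `K`. -/
structure IsConstrainedTrajectory [MeasurableSpace E] [MeasurableSpace V] (G : ℝ × E × V → E)
    (U : Set V) (T : ℝ) (x₀ : E) (X K : Set E) (x : ℝ → E) (u : ℝ → V) : Prop
    extends IsApproxTrajectory G U T x₀ 0 x u where
  state_mem : ∀ t ∈ Icc 0 T, x t ∈ X
  terminal_mem : x T ∈ K

variable [FiniteDimensional ℝ E] [MeasurableSpace E] [BorelSpace E] [FiniteDimensional ℝ V]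
  [MeasurableSpace V] [BorelSpace V]

theorem DualValueLE.exists_trajectory (hdual : DualValueLE {z | z.2.2 ∈ U} univ G ℓ Φ T x₀ C)
    (h : IsConvexControlProblem U G ℓ b) (hT : 0 < T) {L : NNReal} (hΦ : LipschitzWith L Φ)
    (hΦc : ∀ x, -c ≤ Φ x) :
    ∃ x u, Continuous x ∧ IsApproxTrajectory G U T x₀ 0 x u ∧
      (∫ t in 0..T, ℓ (t, x t, u t)) + Φ (x T) ≤ C := by
  have := FiniteDimensional.complete ℝ E
  have := FiniteDimensional.complete ℝ V
  choose y w hyw hcost using fun k : ℕ => hdual.exists_isApproxTrajectory h.nonempty hT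
    h.uniformContinuous_field h.norm_field_le h.uniformContinuous_cost h.norm_cost_le hΦ hΦc
    (Nat.one_div_pos_of_nat (n := k))
  obtain ⟨σ, x, u, hσ, hx, hxu, hlim⟩ := exists_subseq_tendstoTrajectory hT.le h.isCompact h.convex
    h.nonempty h.uniformContinuous_field.continuous h.norm_field_le hyw
    tendsto_one_div_add_atTop_nhds_zero_nat
  have hε := tendsto_one_div_add_atTop_nhds_zero_nat (𝕜 := ℝ) |>.comp hσ.tendsto_atTop
  have hyT := hlim.tendstoUniformlyOn_state.tendsto_at (right_mem_Icc.2 hT.le)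
  have hle := hlim.intervalIntegral_le hT.le h.isCompact
    (fun k => (hyw (σ k)).toIsControlledPath) hxu hx h.uniformContinuous_cost h.norm_cost_le
    h.cost_convex ((hε.const_add C).sub ((hΦ.continuous.tendsto _).comp hyT))
    fun k => le_sub_iff_add_le.2 (hcost (σ k))
  refine ⟨x, u, hx, hlim.isApproxTrajectory h.isCompact h.convex (fun k => hyw (σ k)) hxu hx
    h.uniformContinuous_field h.norm_field_le h.field_affine hε, ?_⟩
  linarith

theorem DualValueLE.exists_penalized_trajectory
    (hdual : DualValueLE (Icc 0 T ×ˢ X ×ˢ U) K G ℓ Φ T x₀ C)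
    (h : IsConvexControlProblem U G ℓ b) (hT : 0 < T) (hX : IsClosed X) (hXn : X.Nonempty)
    (hK : IsCompact K) (hKn : K.Nonempty) (hΦ : ContinuousOn Φ K) (N : NNReal) :
    ∃ x u, ∃ p ∈ K, IsApproxTrajectory G U T x₀ 0 x u ∧
      (∫ t in 0..T, ℓ (t, x t, u t)) + N * (∫ t in 0..T, truncInfDist X (x t)) +
        (Φ p + N * dist (x T) p) ≤ C := by
  obtain ⟨q, -, hq⟩ := hK.exists_isMinOn hKn hΦ
  obtain ⟨p, hpK, hpLip, hple⟩ := exists_lipschitzWith_penalty hK hKn hΦ N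
  have hdual' : DualValueLE {z | z.2.2 ∈ U} univ G (fun z => ℓ z + N * truncInfDist X z.2.1)
      (fun x => Φ (p x) + N * dist x (p x)) T x₀ C := fun v hv hvT => by
    refine hdual v ⟨hv.contDiff, fun z hz => ?_⟩ fun x hx => (hvT x (mem_univ x)).trans (hple x hx)
    simpa [(truncInfDist_eq_zero_iff hX hXn).2 hz.2.1] using hv.fderiv_add_nonneg z hz.2.2
  have hlow : ∀ x, - -Φ q ≤ Φ (p x) + N * dist x (p x) := fun x => by
    rw [neg_neg]
    exact le_add_of_le_of_nonneg (hq (hpK x)) (by positivity)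
  obtain ⟨x, u, -, hxu, hcost⟩ := hdual'.exists_trajectory (h.add_penalty N) hT hpLip hlow
  rw [intervalIntegral.integral_add, intervalIntegral.integral_const_mul] at hcost
  · exact ⟨x, u, p (x T), hpK _, hxu, hcost⟩
  · exact hxu.intervalIntegrable_comp h.uniformContinuous_cost.continuous h.norm_cost_le 0 T
  · exact (hxu.intervalIntegrable_comp uniformContinuous_truncInfDist_state.continuous
      (fun _ => norm_truncInfDist_le _) 0 T).const_mul (N : ℝ)

theorem DualValueLE.exists_almost_constrained_trajectory
    (hdual : DualValueLE (Icc 0 T ×ˢ X ×ˢ U) K G ℓ Φ T x₀ C)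
    (h : IsConvexControlProblem U G ℓ b) (hT : 0 < T) (hX : IsClosed X) (hXn : X.Nonempty)
    (hK : IsCompact K) (hKn : K.Nonempty) (hΦ : ContinuousOn Φ K) {ε : ℝ} (hε : 0 < ε) :
    ∃ x u, ∃ p ∈ K, IsApproxTrajectory G U T x₀ 0 x u ∧
      (∫ t in 0..T, ℓ (t, x t, u t)) + Φ p ≤ C ∧
      (∫ t in 0..T, truncInfDist X (x t)) ≤ ε ∧ dist (x T) p ≤ ε := by
  obtain ⟨q, -, hq⟩ := hK.exists_isMinOn hKn hΦ
  let M := |C + b * T - Φ q| + 1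
  have hM : C + b * T - Φ q ≤ M := (le_abs_self _).trans (le_add_of_nonneg_right zero_le_one)
  have hM0 : 0 < M := by positivity
  lift M / ε to NNReal using (by positivity) with N hN
  have hN0 : (0 : ℝ) < N := hN ▸ div_pos hM0 hε
  obtain ⟨x, u, p, hpK, hxu, hcost⟩ := hdual.exists_penalized_trajectory h hT hX hXn hK hKn hΦ N
  have hΦp : Φ q ≤ Φ p := hq hpK
  have hℓ : -(b * T) ≤ ∫ t in 0..T, ℓ (t, x t, u t) := by
    have := intervalIntegral.norm_integral_le_of_norm_le_const (a := 0) (b := T)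
      fun t _ => h.norm_cost_le (t, x t, u t)
    rw [sub_zero, abs_of_pos hT] at this
    exact (abs_le.1 this).1
  have hd : 0 ≤ N * ∫ t in 0..T, truncInfDist X (x t) :=
    mul_nonneg hN0.le (intervalIntegral.integral_nonneg hT.le fun _ _ => truncInfDist_nonneg _)
  have hp : 0 ≤ N * dist (x T) p := by positivity
  have hNε : N * ε = M := by rw [hN, div_mul_cancel₀ _ hε.ne']
  exact ⟨x, u, p, hpK, hxu, by linarith, le_of_mul_le_mul_left (by linarith) hN0,
    le_of_mul_le_mul_left (by linarith) hN0⟩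

theorem DualValueLE.exists_constrained_trajectory
    (hdual : DualValueLE (Icc 0 T ×ˢ X ×ˢ U) K G ℓ Φ T x₀ C)
    (h : IsConvexControlProblem U G ℓ b) (hT : 0 < T) (hX : IsClosed X) (hXn : X.Nonempty)
    (hK : IsCompact K) (hKn : K.Nonempty) (hΦ : ContinuousOn Φ K) :
    ∃ x u, IsConstrainedTrajectory G U T x₀ X K x u ∧
      (∫ t in 0..T, ℓ (t, x t, u t)) + Φ (x T) ≤ C := by
  have := FiniteDimensional.complete ℝ E
  have := FiniteDimensional.complete ℝ V
  choose y w p hpK hyw hcost hpen hdist using fun k : ℕ =>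
    hdual.exists_almost_constrained_trajectory h hT hX hXn hK hKn hΦ
      (Nat.one_div_pos_of_nat (n := k))
  obtain ⟨σ, x, u, hσ, hx, hxu, hlim⟩ := exists_subseq_tendstoTrajectory hT.le h.isCompact h.convex
    h.nonempty h.uniformContinuous_field.continuous h.norm_field_le hyw tendsto_const_nhds
  have hε := tendsto_one_div_add_atTop_nhds_zero_nat (𝕜 := ℝ) |>.comp hσ.tendsto_atTop
  have hpT : Tendsto (fun k => p (σ k)) atTop (𝓝 (x T)) :=
    tendsto_of_tendsto_of_dist (hlim.tendstoUniformlyOn_state.tendsto_at (right_mem_Icc.2 hT.le))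
      (squeeze_zero (fun _ => dist_nonneg) (fun k => hdist (σ k)) hε)
  have hxT : x T ∈ K := hK.isClosed.mem_of_tendsto hpT (.of_forall fun k => hpK _)
  have hpath := fun k => (hyw (σ k)).toIsControlledPath
  have hd : ∫ t in 0..T, truncInfDist X (x t) ≤ 0 :=
    hlim.intervalIntegral_le hT.le h.isCompact hpath hxu hx
      uniformContinuous_truncInfDist_state (fun _ => norm_truncInfDist_le _)
      (fun _ x => convexOn_const (truncInfDist X x) h.convex) hε fun k => hpen (σ k)
  have hxX : ∀ t ∈ Icc 0 T, x t ∈ X := fun t ht => by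
    rw [← truncInfDist_eq_zero_iff hX hXn]
    by_contra hne
    exact hd.not_gt <| intervalIntegral.integral_pos hT
      (uniformContinuous_truncInfDist.continuous.comp hx).continuousOn
      (fun _ _ => truncInfDist_nonneg _) ⟨t, ht, (truncInfDist_nonneg _).lt_of_ne' hne⟩
  have htraj := hlim.isApproxTrajectory h.isCompact h.convex (fun k => hyw (σ k)) hxu hx
    h.uniformContinuous_field h.norm_field_le h.field_affine tendsto_const_nhds
  refine ⟨x, u, ⟨htraj, hxX, hxT⟩, ?_⟩
  have hΦp := (hΦ _ hxT).tendsto.comp (tendsto_nhdsWithin_iff.2 ⟨hpT, .of_forall fun k => hpK _⟩)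
  have hle := hlim.intervalIntegral_le hT.le h.isCompact hpath hxu hx h.uniformContinuous_cost
    h.norm_cost_le h.cost_convex (hΦp.const_sub C) fun k => le_sub_iff_add_le.2 (hcost (σ k))
  linarith

end ExactTrajectory

section Perturbation

open Filter
open scoped Topology

variable {E V : Type*} [NormedAddCommGroup E] [NormedSpace ℝ E] [NormedAddCommGroup V]
  [NormedSpace ℝ V] {X K : Set E} {U : Set V} {G : ℝ × E × V → E} {ℓ ψ : ℝ × E × V → ℝ}
  {Φ : E → ℝ} {T b c₀ c₁ : ℝ} {x₀ : E}

lemma IsConvexControlProblem.sub_smul (h : IsConvexControlProblem U G ℓ b)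
    (hψ : UniformContinuous ψ) (hψb : ∀ z, ‖ψ z‖ ≤ b)
    (hψc : ∀ t x, ConcaveOn ℝ U fun v => ψ (t, x, v)) {s : ℝ} (hs : s ∈ Icc 0 1) :
    IsConvexControlProblem U G (fun z => ℓ z - s * ψ z) (2 * b) where
  __ := h
  norm_field_le z := by linarith [h.norm_field_le z, norm_nonneg (G z)]
  uniformContinuous_cost := h.uniformContinuous_cost.sub (hψ.const_mul' s)
  norm_cost_le z := by
    rw [two_mul]
    refine norm_sub_le_of_le (h.norm_cost_le z) ?_
    rw [norm_mul, Real.norm_of_nonneg hs.1]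
    exact (mul_le_of_le_one_left (norm_nonneg _) hs.2).trans (hψb z)
  cost_convex t x := (h.cost_convex t x).sub ((hψc t x).smul hs.1)

variable [FiniteDimensional ℝ E] [MeasurableSpace E] [BorelSpace E] [FiniteDimensional ℝ V]
  [MeasurableSpace V] [BorelSpace V]

theorem exists_subseq_tendsto_isConstrainedTrajectory (h : IsConvexControlProblem U G ℓ b)
    (hT : 0 ≤ T) (hX : IsClosed X) (hK : IsClosed K) {y : ℕ → ℝ → E} {w : ℕ → ℝ → V}
    (hyw : ∀ k, IsConstrainedTrajectory G U T x₀ X K (y k) (w k)) :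
    ∃ (σ : ℕ → ℕ) (x : ℝ → E) (u : ℝ → V), StrictMono σ ∧ Continuous x ∧
      IsConstrainedTrajectory G U T x₀ X K x u ∧
      TendstoTrajectory T (fun k => y (σ k)) (fun k => w (σ k)) x u := by
  have := FiniteDimensional.complete ℝ E
  have := FiniteDimensional.complete ℝ V
  obtain ⟨σ, x, u, hσ, hx, hxu, hlim⟩ := exists_subseq_tendstoTrajectory hT h.isCompact h.convex
    h.nonempty h.uniformContinuous_field.continuous h.norm_field_le
    (fun k => (hyw k).toIsApproxTrajectory) tendsto_const_nhds
  have hyx := fun t => hlim.tendstoUniformlyOn_state.tendsto_at (x := t)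
  refine ⟨σ, x, u, hσ, hx, ⟨?_, fun t ht => ?_, ?_⟩, hlim⟩
  · exact hlim.isApproxTrajectory h.isCompact h.convex (fun k => (hyw (σ k)).toIsApproxTrajectory)
      hxu hx h.uniformContinuous_field h.norm_field_le h.field_affine tendsto_const_nhds
  · exact hX.mem_of_tendsto (hyx t ht) (.of_forall fun k => (hyw (σ k)).state_mem t ht)
  · exact hK.mem_of_tendsto (hyx T (right_mem_Icc.2 hT))
      (.of_forall fun k => (hyw (σ k)).terminal_mem)

theorem exists_perturbed_trajectory
    (h : IsConvexControlProblem U G ℓ b) (hψ : UniformContinuous ψ) (hψb : ∀ z, ‖ψ z‖ ≤ b)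
    (hψc : ∀ t x, ConcaveOn ℝ U fun v => ψ (t, x, v)) (hT : 0 < T) (hX : IsClosed X)
    (hXn : X.Nonempty) (hK : IsCompact K) (hKn : K.Nonempty) (hΦ : ContinuousOn Φ K) {s : ℝ}
    (hs : s ∈ Ioc 0 1)
    (hdual : DualValueLE (Icc 0 T ×ˢ X ×ˢ U) K G (fun z => ℓ z - s * ψ z) Φ T x₀ (c₀ - s * c₁))
    (hlow : ∀ x u, IsConstrainedTrajectory G U T x₀ X K x u →
      c₀ ≤ (∫ t in 0..T, ℓ (t, x t, u t)) + Φ (x T)) :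
    ∃ x u, IsConstrainedTrajectory G U T x₀ X K x u ∧
      (∫ t in 0..T, ℓ (t, x t, u t)) + Φ (x T) ≤ c₀ + s * (b * T - c₁) ∧
      c₁ ≤ ∫ t in 0..T, ψ (t, x t, u t) := by
  obtain ⟨x, u, hxu, hcost⟩ := hdual.exists_constrained_trajectory
    (h.sub_smul hψ hψb hψc (Ioc_subset_Icc_self hs)) hT hX hXn hK hKn hΦ
  rw [intervalIntegral.integral_sub
    (hxu.intervalIntegrable_comp h.uniformContinuous_cost.continuous h.norm_cost_le 0 T)
    ((hxu.intervalIntegrable_comp hψ.continuous hψb 0 T).const_mul s),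
    intervalIntegral.integral_const_mul] at hcost
  have hψT : ∫ t in 0..T, ψ (t, x t, u t) ≤ b * T := by
    have := intervalIntegral.norm_integral_le_of_norm_le_const (a := 0) (b := T)
      fun t _ => hψb (t, x t, u t)
    rw [sub_zero, abs_of_pos hT] at this
    exact (le_abs_self _).trans this
  refine ⟨x, u, hxu, ?_, le_of_mul_le_mul_left (by linarith [hlow x u hxu]) hs.1⟩
  linarith [mul_le_mul_of_nonneg_left hψT hs.1.le]

-- The inequality `c₁ ≤ ∫ ψ` survives in the limit `s → 0` because `-ψ` is convex in the control.
theorem exists_constrained_trajectory_of_forall_dualValueLE_sub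
    (h : IsConvexControlProblem U G ℓ b) (hψ : UniformContinuous ψ) (hψb : ∀ z, ‖ψ z‖ ≤ b)
    (hψc : ∀ t x, ConcaveOn ℝ U fun v => ψ (t, x, v)) (hT : 0 < T) (hX : IsClosed X)
    (hXn : X.Nonempty) (hK : IsCompact K) (hKn : K.Nonempty) (hΦ : ContinuousOn Φ K)
    (hdual : ∀ s : ℝ,
      DualValueLE (Icc 0 T ×ˢ X ×ˢ U) K G (fun z => ℓ z - s * ψ z) Φ T x₀ (c₀ - s * c₁))
    (hlow : ∀ x u, IsConstrainedTrajectory G U T x₀ X K x u →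
      c₀ ≤ (∫ t in 0..T, ℓ (t, x t, u t)) + Φ (x T)) :
    ∃ x u, IsConstrainedTrajectory G U T x₀ X K x u ∧
      (∫ t in 0..T, ℓ (t, x t, u t)) + Φ (x T) ≤ c₀ ∧ c₁ ≤ ∫ t in 0..T, ψ (t, x t, u t) := by
  have := FiniteDimensional.complete ℝ E
  have := FiniteDimensional.complete ℝ V
  choose y w hyw hcost hc₁ using fun k : ℕ => exists_perturbed_trajectory h hψ hψb hψc hT hX hXn
    hK hKn hΦ ⟨Nat.one_div_pos_of_nat (n := k),
      by simpa using Nat.one_div_le_one_div (α := ℝ) k.zero_le⟩ (hdual _) hlow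
  obtain ⟨σ, x, u, hσ, hx, hxu, hlim⟩ :=
    exists_subseq_tendsto_isConstrainedTrajectory h hT.le hX hK.isClosed hyw
  have hs := tendsto_one_div_add_atTop_nhds_zero_nat (𝕜 := ℝ) |>.comp hσ.tendsto_atTop
  have hΦT : Tendsto (fun k => Φ (y (σ k) T)) atTop (𝓝 (Φ (x T))) :=
    (hΦ _ hxu.terminal_mem).tendsto.comp (tendsto_nhdsWithin_iff.2
      ⟨hlim.tendstoUniformlyOn_state.tendsto_at (right_mem_Icc.2 hT.le),
        .of_forall fun k => (hyw (σ k)).terminal_mem⟩)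
  have hpath := fun k => (hyw (σ k)).toIsControlledPath
  have hℓ := hlim.intervalIntegral_le hT.le h.isCompact hpath hxu.toIsControlledPath hx
    h.uniformContinuous_cost h.norm_cost_le h.cost_convex
    (((hs.mul_const (b * T - c₁)).const_add c₀).sub hΦT)
    fun k => le_sub_iff_add_le.2 (hcost (σ k))
  have hψlim := hlim.intervalIntegral_le hT.le h.isCompact hpath hxu.toIsControlledPath hx hψ.neg
    (fun z => (norm_neg _).trans_le (hψb z)) (fun t x => (hψc t x).neg)
    (tendsto_const_nhds (x := -c₁)) fun k => by simpa using hc₁ (σ k)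
  rw [zero_mul, add_zero] at hℓ
  rw [intervalIntegral.integral_neg] at hψlim
  exact ⟨x, u, hxu, by linarith, neg_le_neg_iff.1 hψlim⟩

end Perturbation

section SmoothTestFunctions

variable {E V : Type*} [NormedAddCommGroup E] [NormedSpace ℝ E] [MeasurableSpace E]
  [MeasurableSpace V] {U : Set V} {G : ℝ × E × V → E} {T b : ℝ} {x₀ : E}
  {x : ℝ → E} {u : ℝ → V}

lemma IsApproxTrajectory.eq_add_intervalIntegral (h : IsApproxTrajectory G U T x₀ 0 x u) {t : ℝ}
    (ht : t ∈ Icc 0 T) : x t = x₀ + ∫ s in 0..t, G (s, x s, u s) := by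
  have := norm_le_zero_iff.1 (h.norm_sub_integral_le t ht)
  rwa [sub_sub, sub_eq_zero] at this

theorem IsApproxTrajectory.intervalIntegral_fderiv_eq_sub [FiniteDimensional ℝ E]
    [BorelSpace E] [TopologicalSpace V] [SecondCountableTopology V] [BorelSpace V] {v : ℝ × E → ℝ}
    (h : IsApproxTrajectory G U T x₀ 0 x u) (hT : 0 ≤ T) (hG : Continuous G) (hGb : ∀ z, ‖G z‖ ≤ b)
    (hv : ContDiff ℝ 1 v) :
    ∫ t in 0..T, fderiv ℝ v (t, x t) (1, G (t, x t, u t)) = v (T, x T) - v (0, x₀) := by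
  have := FiniteDimensional.complete ℝ E
  have hGi := intervalIntegrable_comp_path hG hGb
    (h.measurable_state.prodMk h.measurable_control)
  let y : ℝ → E := fun t => x₀ + ∫ s in 0..t, G (s, x s, u s)
  have hyx : ∀ t ∈ Icc 0 T, x t = y t := fun t => h.eq_add_intervalIntegral
  have hy : LipschitzWith b.toNNReal y := lipschitzWith_add_intervalIntegral hGi
    (fun _ => (hGb _).trans b.le_coe_toNNReal) x₀ 0
  obtain ⟨K, hK⟩ := ((hv.locallyLipschitz.comp (LipschitzWith.id.prodMk hy).locallyLipschitz)
    |>.locallyLipschitzOn (s := uIcc 0 T)).exists_lipschitzOnWith_of_compact isCompact_uIcc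
  have hftc := hK.absolutelyContinuousOnInterval.integral_deriv_eq_sub
  have hy0 : y 0 = x₀ := by simp [y]
  simp only [Function.comp_apply, id, ← hyx T (right_mem_Icc.2 hT), hy0] at hftc
  rw [← hftc]
  refine intervalIntegral.integral_congr_ae_restrict ?_
  rw [Filter.EventuallyEq, ae_restrict_iff' measurableSet_uIoc]
  filter_upwards [(hGi 0 T).ae_hasDerivAt_integral] with t ht htT
  rw [uIoc_of_le hT] at htT
  rw [uIcc_of_le hT] at ht
  have hyt := (ht (Ioc_subset_Icc_self htT) 0 (left_mem_Icc.2 hT)).const_add x₀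
  have hvt := ((hv.differentiable one_ne_zero) (t, y t)).hasFDerivAt.comp_hasDerivAt t
    ((hasDerivAt_id t).prodMk hyt)
  rw [hyx t (Ioc_subset_Icc_self htT)]
  rw [hyx t (Ioc_subset_Icc_self htT)] at hvt
  exact hvt.deriv.symm

end SmoothTestFunctions

section Clamp

variable {α β : Type*} [Lattice α] [Lattice β]

/-- The retraction of a lattice onto the order interval `[a, b]`. -/
def clampIcc (a b x : α) : α := a ⊔ x ⊓ b

variable {a b x : α}

lemma clampIcc_mem (h : a ≤ b) (x : α) : clampIcc a b x ∈ Icc a b :=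
  ⟨le_sup_left, sup_le h inf_le_right⟩

lemma clampIcc_of_mem (hx : x ∈ Icc a b) : clampIcc a b x = x := by
  rw [clampIcc, inf_eq_left.2 hx.2, sup_eq_right.2 hx.1]

lemma uniformContinuous_clampIcc_real (a b : ℝ) : UniformContinuous (clampIcc a b) :=
  ((LipschitzWith.id.min_const b).const_max a).uniformContinuous

lemma uniformContinuous_clampIcc_pi {ι : Type*} (a b : ι → ℝ) :
    UniformContinuous (clampIcc a b) :=
  uniformContinuous_pi.2 fun i =>
    (uniformContinuous_clampIcc_real (a i) (b i)).comp (Pi.uniformContinuous_proj _ i)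

lemma uniformContinuous_clampIcc_prod [UniformSpace α] [UniformSpace β] {a b : α × β}
    (h₁ : UniformContinuous (clampIcc a.1 b.1)) (h₂ : UniformContinuous (clampIcc a.2 b.2)) :
    UniformContinuous (clampIcc a b) :=
  (h₁.comp uniformContinuous_fst).prodMk (h₂.comp uniformContinuous_snd)

lemma uniformContinuous_comp_clampIcc [UniformSpace α] [CompactIccSpace α] {Y : Type*}
    [UniformSpace Y] {q : α → Y} (h : a ≤ b) (hc : UniformContinuous (clampIcc a b))
    (hq : ContinuousOn q (Icc a b)) : UniformContinuous (q ∘ clampIcc a b) :=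
  (uniformContinuousOn_iff_restrict.1 (isCompact_Icc.uniformContinuousOn_of_continuous hq)).comp
    (hc.subtype_mk (clampIcc_mem h))

lemma exists_norm_comp_clampIcc_le [TopologicalSpace α] [CompactIccSpace α] {Y : Type*}
    [SeminormedAddCommGroup Y] {q : α → Y} (h : a ≤ b) (hq : ContinuousOn q (Icc a b)) :
    ∃ c, ∀ x, ‖q (clampIcc a b x)‖ ≤ c :=
  (isCompact_Icc.exists_bound_of_continuousOn hq).imp fun _ hc x => hc _ (clampIcc_mem h x)

end Clamp

section ControlAffineData

variable {n m : ℕ} {f : ℝ × (Fin n → ℝ) → Fin n → ℝ} {g : ℝ × (Fin n → ℝ) → Fin n → Fin m → ℝ}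
  {h ψ : ℝ × (Fin n → ℝ) × (Fin m → ℝ) → ℝ} {T : ℝ} {a b : Fin n → ℝ}

lemma Fvec_eq_add_mulVecLin (z : ℝ × (Fin n → ℝ)) (u : Fin m → ℝ) :
    Fvec f g (z.1, z.2, u) = f z + Matrix.mulVecLin (g z) u := rfl

lemma continuousOn_Fvec (hf : ContinuousOn f (Icc 0 T ×ˢ univ))
    (hg : ContinuousOn g (Icc 0 T ×ˢ univ)) : ContinuousOn (Fvec f g) (Icc 0 T ×ˢ univ) := by
  have hp : ContinuousOn (fun z : ℝ × (Fin n → ℝ) × (Fin m → ℝ) => (z.1, z.2.1))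
      (Icc 0 T ×ˢ univ) := by fun_prop
  have hmaps : MapsTo (fun z : ℝ × (Fin n → ℝ) × (Fin m → ℝ) => (z.1, z.2.1)) (Icc 0 T ×ˢ univ)
      (Icc 0 T ×ˢ univ) := fun z hz => ⟨hz.1, mem_univ _⟩
  refine continuousOn_pi.2 fun k => (continuousOn_pi.1 (hf.comp hp hmaps) k).add
    (continuousOn_finsetSum _ fun j _ => ?_)
  exact (continuousOn_pi.1 (continuousOn_pi.1 (hg.comp hp hmaps) k) j).mul (by fun_prop)

lemma convex_Ubox : Convex ℝ (Ubox m) := convex_Icc _ _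

lemma nonempty_Ubox : (Ubox m).Nonempty := ⟨0, fun _ => by simp, fun _ => by simp⟩

/-- The clamp of time–state–control triples to the box `[0, T] × [a, b] × [-1, 1]^m`. Data that are
continuous on this box become bounded and uniformly continuous when composed with it. -/
def dataClamp (T : ℝ) (a b : Fin n → ℝ) :
    ℝ × (Fin n → ℝ) × (Fin m → ℝ) → ℝ × (Fin n → ℝ) × (Fin m → ℝ) :=
  clampIcc (0, a, fun _ => -1) (T, b, fun _ => 1)

lemma dataClamp_of_mem {z : ℝ × (Fin n → ℝ) × (Fin m → ℝ)}
    (hz : z ∈ Icc 0 T ×ˢ Icc a b ×ˢ Ubox m) : dataClamp T a b z = z :=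
  clampIcc_of_mem (by rwa [Icc_prod_eq, Icc_prod_eq])

lemma dataClamp_of_control_mem (t : ℝ) (x : Fin n → ℝ) {u : Fin m → ℝ} (hu : u ∈ Ubox m) :
    dataClamp T a b (t, x, u) = (clampIcc 0 T t, clampIcc a b x, u) :=
  congrArg (fun w => (clampIcc 0 T t, clampIcc a b x, w)) (clampIcc_of_mem hu)

variable {Y : Type*} {q : ℝ × (Fin n → ℝ) × (Fin m → ℝ) → Y}

lemma uniformContinuous_comp_dataClamp [UniformSpace Y] (hT : 0 ≤ T) (hab : a ≤ b)
    (hq : ContinuousOn q (Icc 0 T ×ˢ univ)) : UniformContinuous (q ∘ dataClamp T a b) :=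
  uniformContinuous_comp_clampIcc ⟨hT, hab, fun _ => by norm_num⟩
    (uniformContinuous_clampIcc_prod (uniformContinuous_clampIcc_real _ _)
      (uniformContinuous_clampIcc_prod (uniformContinuous_clampIcc_pi _ _)
        (uniformContinuous_clampIcc_pi _ _)))
    (hq.mono <| by rw [Icc_prod_eq]; exact prod_mono_right (subset_univ _))

lemma exists_norm_comp_dataClamp_le [SeminormedAddCommGroup Y] (hT : 0 ≤ T) (hab : a ≤ b)
    (hq : ContinuousOn q (Icc 0 T ×ˢ univ)) : ∃ c, ∀ z, ‖q (dataClamp T a b z)‖ ≤ c :=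
  exists_norm_comp_clampIcc_le ⟨hT, hab, fun _ => by norm_num⟩
    (hq.mono <| by rw [Icc_prod_eq]; exact prod_mono_right (subset_univ _))

theorem exists_isConvexControlProblem_comp_dataClamp (hT : 0 ≤ T) (hab : a ≤ b)
    (hf : ContinuousOn f (Icc 0 T ×ˢ univ)) (hg : ContinuousOn g (Icc 0 T ×ˢ univ))
    (hh : ContinuousOn h (Icc 0 T ×ˢ univ)) (hψ : ContinuousOn ψ (Icc 0 T ×ˢ univ))
    (hconv : ∀ t x, ConvexOn ℝ (Ubox m) fun u => h (t, x, u)) :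
    ∃ c, IsConvexControlProblem (Ubox m) (Fvec f g ∘ dataClamp T a b) (h ∘ dataClamp T a b) c ∧
      ∀ z, ‖ψ (dataClamp T a b z)‖ ≤ c := by
  have hF := continuousOn_Fvec hf hg
  obtain ⟨c, hc⟩ := exists_norm_comp_dataClamp_le hT hab (hF.prodMk (hh.prodMk hψ))
  refine ⟨c, ⟨isCompact_Icc, convex_Ubox, nonempty_Ubox,
    uniformContinuous_comp_dataClamp hT hab hF, fun z => (norm_fst_le _).trans (hc z),
    fun t x => ?_, uniformContinuous_comp_dataClamp hT hab hh,
    fun z => ((norm_fst_le _).trans (norm_snd_le _)).trans (hc z), fun t x => ?_⟩,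
    fun z => ((norm_snd_le _).trans (norm_snd_le _)).trans (hc z)⟩
  · let z := (clampIcc 0 T t, clampIcc a b x)
    refine ⟨AffineMap.const ℝ _ (f z) + (Matrix.mulVecLin (g z)).toAffineMap, fun u hu => ?_⟩
    rw [Function.comp_apply, dataClamp_of_control_mem t x hu]
    exact Fvec_eq_add_mulVecLin z u
  · refine (hconv (clampIcc 0 T t) (clampIcc a b x)).congr fun u hu => ?_
    rw [Function.comp_apply, dataClamp_of_control_mem t x hu]

end ControlAffineData

section WeakDuality

lemma DualValueLE.congr {E V : Type*} [NormedAddCommGroup E] [NormedSpace ℝ E]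
    {D : Set (ℝ × E × V)} {K : Set E} {G G' : ℝ × E × V → E} {ℓ ℓ' : ℝ × E × V → ℝ} {Φ : E → ℝ}
    {T C : ℝ} {x₀ : E} (h : DualValueLE D K G ℓ Φ T x₀ C) (hG : EqOn G' G D) (hℓ : EqOn ℓ' ℓ D) :
    DualValueLE D K G' ℓ' Φ T x₀ C :=
  fun v hv => h v ⟨hv.contDiff, fun z hz => by
    rw [← hG hz, ← hℓ hz]; exact hv.fderiv_add_nonneg z hz⟩

lemma integrable_of_continuousOn_of_measure_compl_eq_zero {α Y : Type*} [TopologicalSpace α]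
    [T2Space α] [MeasurableSpace α] [OpensMeasurableSpace α] [NormedAddCommGroup Y]
    {μ : Measure α} [IsFiniteMeasureOnCompacts μ] {K : Set α} (hK : IsCompact K)
    (hμ : μ Kᶜ = 0) {q : α → Y} (hq : ContinuousOn q K) : Integrable q μ := by
  have := hq.integrableOn_compact (μ := μ) hK
  rwa [IntegrableOn, Measure.restrict_eq_self_of_ae_mem (mem_ae_iff.2 hμ)] at this

variable {n m : ℕ} {f : ℝ × (Fin n → ℝ) → Fin n → ℝ} {g : ℝ × (Fin n → ℝ) → Fin n → Fin m → ℝ}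
  {T : ℝ} {X XT : Set (Fin n → ℝ)} {x₀ : Fin n → ℝ} {q : ℝ × (Fin n → ℝ) × (Fin m → ℝ) → ℝ}
  {H : (Fin n → ℝ) → ℝ} {η : Measure (ℝ × (Fin n → ℝ) × (Fin m → ℝ))}
  {ηT : Measure (Fin n → ℝ)} {v : ℝ × (Fin n → ℝ) → ℝ}

lemma LFop_eq_fderiv (f : ℝ × (Fin n → ℝ) → Fin n → ℝ) (g : ℝ × (Fin n → ℝ) → Fin n → Fin m → ℝ)
    (v : ℝ × (Fin n → ℝ) → ℝ) :
    LFop f g v = fun z => fderiv ℝ v (z.1, z.2.1) (1, Fvec f g z) := by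
  funext z
  have hdir : ((1 : ℝ), Fvec f g z) = ((1 : ℝ), (0 : Fin n → ℝ)) +
      ∑ k, Fvec f g z k • ((0 : ℝ), (Pi.single k (1 : ℝ) : Fin n → ℝ)) := by
    ext i
    · simp [Prod.fst_sum]
    · simp [Prod.snd_sum, Finset.sum_apply, Pi.single_apply]
  simp only [hdir, map_add, map_sum, map_smul, smul_eq_mul, LFop, mul_comm]

lemma continuousOn_LFop (hf : ContinuousOn f (Icc 0 T ×ˢ univ))
    (hg : ContinuousOn g (Icc 0 T ×ˢ univ)) (hv : ContDiff ℝ 1 v) :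
    ContinuousOn (LFop f g v) (Icc 0 T ×ˢ univ) := by
  rw [LFop_eq_fderiv]
  exact ((hv.continuous_fderiv one_ne_zero).comp (by fun_prop :
    Continuous fun z : ℝ × (Fin n → ℝ) × (Fin m → ℝ) => (z.1, z.2.1))).continuousOn.clm_apply
    (continuousOn_const.prodMk (continuousOn_Fvec hf hg))

lemma isCompact_dataSet (hX : IsCompact X) : IsCompact (Icc 0 T ×ˢ X ×ˢ Ubox m) :=
  isCompact_Icc.prod (hX.prod isCompact_Icc)

lemma QFeasible.integrable {Y : Type*} [NormedAddCommGroup Y]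
    {q : ℝ × (Fin n → ℝ) × (Fin m → ℝ) → Y} (hη : QFeasible T X XT x₀ f g η ηT)
    (hX : IsCompact X) (hq : ContinuousOn q (Icc 0 T ×ˢ univ)) : Integrable q η :=
  have := hη.1
  integrable_of_continuousOn_of_measure_compl_eq_zero (isCompact_dataSet hX) hη.2.2.1
    (hq.mono (prod_mono_right (subset_univ _)))

lemma QFeasible.integrable_terminal (hη : QFeasible T X XT x₀ f g η ηT) (hXT : IsCompact XT)
    (hH : ContinuousOn H XT) : Integrable H ηT :=
  have := hη.2.1
  integrable_of_continuousOn_of_measure_compl_eq_zero hXT hη.2.2.2.1 hH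

theorem QFeasible.dualValueLE (hη : QFeasible T X XT x₀ f g η ηT) (hX : IsCompact X)
    (hXT : IsCompact XT) (hf : ContinuousOn f (Icc 0 T ×ˢ univ))
    (hg : ContinuousOn g (Icc 0 T ×ˢ univ)) (hq : ContinuousOn q (Icc 0 T ×ˢ univ))
    (hH : ContinuousOn H XT) :
    DualValueLE (Icc 0 T ×ˢ X ×ˢ Ubox m) XT (Fvec f g) q H T x₀ (Qcost q H η ηT) := by
  intro v hv hvH
  have hrun : 0 ≤ ∫ z, LFop f g v z + q z ∂η := by
    refine integral_nonneg_of_ae ?_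
    filter_upwards [mem_ae_iff.2 hη.2.2.1] with z hz
    rw [LFop_eq_fderiv]
    exact hv.fderiv_add_nonneg z hz
  have hvT : Continuous fun y => v (T, y) :=
    hv.contDiff.continuous.comp (continuous_const.prodMk continuous_id)
  have hend : ∫ y, v (T, y) ∂ηT ≤ ∫ y, H y ∂ηT :=
    integral_mono_ae (hη.integrable_terminal hXT hvT.continuousOn) (hη.integrable_terminal hXT hH)
      (by filter_upwards [mem_ae_iff.2 hη.2.2.2.1] with y hy using hvH y hy)
  rw [integral_add (hη.integrable hX (continuousOn_LFop hf hg hv.contDiff))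
    (hη.integrable hX hq)] at hrun
  rw [Qcost]
  linarith [hη.2.2.2.2 v hv.contDiff]

end WeakDuality

section AdmissiblePairs

lemma intervalIntegral_eq_setIntegral_Icc {F : Type*} [NormedAddCommGroup F] [NormedSpace ℝ F]
    {a b : ℝ} (h : a ≤ b) (q : ℝ → F) : ∫ s in a..b, q s = ∫ s in Icc a b, q s := by
  rw [intervalIntegral.integral_of_le h, integral_Icc_eq_integral_Ioc]

lemma IsConstrainedTrajectory.mem {E V : Type*} [NormedAddCommGroup E] [NormedSpace ℝ E]
    [MeasurableSpace E] [MeasurableSpace V] {G : ℝ × E × V → E} {U : Set V} {T : ℝ} {x₀ : E}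
    {X K : Set E} {x : ℝ → E} {u : ℝ → V} (h : IsConstrainedTrajectory G U T x₀ X K x u) {t : ℝ}
    (ht : t ∈ Icc 0 T) : (t, x t, u t) ∈ Icc 0 T ×ˢ X ×ˢ U :=
  ⟨ht, h.state_mem t ht, h.control_mem t⟩

/-- The occupation measure of the path `(x, u)`: the law of `(t, x t, u t)` when `t` is distributed
according to the Lebesgue measure on `[0, T]`. -/
def occupationMeasure {E V : Type*} [MeasurableSpace E] [MeasurableSpace V] (T : ℝ) (x : ℝ → E)
    (u : ℝ → V) : Measure (ℝ × E × V) :=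
  (volume.restrict (Icc 0 T)).map fun t => (t, x t, u t)

instance {E V : Type*} [MeasurableSpace E] [MeasurableSpace V] (T : ℝ) (x : ℝ → E)
    (u : ℝ → V) : IsFiniteMeasure (occupationMeasure T x u) :=
  Measure.isFiniteMeasure_map _ _

lemma integral_occupationMeasure {E V F : Type*} [MeasurableSpace E] [MeasurableSpace V]
    [NormedAddCommGroup F] [NormedSpace ℝ F] {T : ℝ} {x : ℝ → E} {u : ℝ → V} (hx : Measurable x)
    (hu : Measurable u) {q : ℝ × E × V → F}
    (hq : AEStronglyMeasurable q (occupationMeasure T x u)) :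
    ∫ z, q z ∂(occupationMeasure T x u) = ∫ t in Icc 0 T, q (t, x t, u t) :=
  integral_map (measurable_id.prodMk (hx.prodMk hu)).aemeasurable hq

variable {n m : ℕ} {f : ℝ × (Fin n → ℝ) → Fin n → ℝ} {g : ℝ × (Fin n → ℝ) → Fin n → Fin m → ℝ}
  {h : ℝ × (Fin n → ℝ) × (Fin m → ℝ) → ℝ} {H : (Fin n → ℝ) → ℝ} {T t : ℝ}
  {X XT : Set (Fin n → ℝ)} {a b x₀ : Fin n → ℝ} {x : ℝ → Fin n → ℝ} {u : ℝ → Fin m → ℝ}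

lemma eqOn_comp_dataClamp {Y : Type*} (hXab : X ⊆ Icc a b)
    (q : ℝ × (Fin n → ℝ) × (Fin m → ℝ) → Y) :
    EqOn (q ∘ dataClamp T a b) q (Icc 0 T ×ˢ X ×ˢ Ubox m) := fun _ hz =>
  congrArg q (dataClamp_of_mem (prod_mono_right (prod_mono_left hXab) hz))

lemma IsAdmissiblePair.continuousOn_state (hxu : IsAdmissiblePair T X XT x₀ f g x u) :
    ContinuousOn x (Icc 0 T) := by
  obtain ⟨-, -, -, -, -, hint, hdyn⟩ := hxu
  exact (continuousOn_const.add (intervalIntegral.continuousOn_primitive_Icc hint)).congr hdyn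

lemma IsAdmissiblePair.aemeasurable_graph (hxu : IsAdmissiblePair T X XT x₀ f g x u) :
    AEMeasurable (fun t => (t, x t)) (volume.restrict (Icc 0 T)) :=
  aemeasurable_id.prodMk (hxu.continuousOn_state.aemeasurable measurableSet_Icc)

lemma IsAdmissiblePair.integrableOn_control (hxu : IsAdmissiblePair T X XT x₀ f g x u) :
    IntegrableOn u (Icc 0 T) := by
  obtain ⟨c, hc⟩ := (isCompact_Icc.isBounded (s := Ubox m)).exists_norm_le
  exact .of_bound measure_Icc_lt_top hxu.1.aestronglyMeasurable c
    ((ae_restrict_iff' measurableSet_Icc).2 (.of_forall fun t ht => hc _ (hxu.2.1 t ht)))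

lemma IsAdmissiblePair.exists_isConstrainedTrajectory (hxu : IsAdmissiblePair T X XT x₀ f g x u)
    (hT : 0 ≤ T) (hXab : X ⊆ Icc a b) :
    ∃ y w, EqOn y x (Icc 0 T) ∧ EqOn w u (Icc 0 T) ∧
      IsConstrainedTrajectory (Fvec f g ∘ dataClamp T a b) (Ubox m) T x₀ X XT y w := by
  have hxc := hxu.continuousOn_state
  obtain ⟨hu, huU, -, hxT, hxX, -, hdyn⟩ := hxu
  let y := IccExtend hT ((Icc 0 T).domRestrict x)
  let w := fun t => clampIcc (fun _ => -1) (fun _ => 1) (u t)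
  have hy : Continuous y := (continuousOn_iff_continuous_domRestrict.1 hxc).Icc_extend'
  have hyx : EqOn y x (Icc 0 T) := fun t ht => IccExtend_of_mem hT _ ht
  have hwu : EqOn w u (Icc 0 T) := fun t ht => clampIcc_of_mem (huU t ht)
  refine ⟨y, w, hyx, hwu, ⟨⟨hy.measurable, (uniformContinuous_clampIcc_pi _ _).continuous
    |>.measurable.comp hu, fun t => clampIcc_mem (fun _ => by norm_num) _⟩, fun t ht => ?_⟩,
    fun t ht => hyx ht ▸ hxX t ht, by rwa [hyx (right_mem_Icc.2 hT)]⟩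
  rw [hyx ht, hdyn t ht, intervalIntegral_eq_setIntegral_Icc ht.1, add_sub_cancel_left,
    norm_le_zero_iff, sub_eq_zero]
  refine setIntegral_congr_fun measurableSet_Icc fun s hs => ?_
  have hsT : s ∈ Icc 0 T := ⟨hs.1, hs.2.trans ht.2⟩
  rw [hyx hsT, hwu hsT, eqOn_comp_dataClamp hXab _ ⟨hsT, hxX s hsT, huU s hsT⟩]

section OfConstrainedTrajectory

variable
  (hxu : IsConstrainedTrajectory (Fvec f g ∘ dataClamp T a b) (Ubox m) T x₀ X XT x u)
  (hXab : X ⊆ Icc a b)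

include hxu hXab

lemma IsConstrainedTrajectory.intervalIntegral_dataClamp_eq {F : Type*} [NormedAddCommGroup F]
    [NormedSpace ℝ F] (q : ℝ × (Fin n → ℝ) × (Fin m → ℝ) → F) (ht : t ∈ Icc 0 T) :
    ∫ s in 0..t, (q ∘ dataClamp T a b) (s, x s, u s) = ∫ s in Icc 0 t, q (s, x s, u s) := by
  rw [intervalIntegral_eq_setIntegral_Icc ht.1]
  exact setIntegral_congr_fun measurableSet_Icc fun s hs =>
    eqOn_comp_dataClamp hXab q (hxu.mem ⟨hs.1, hs.2.trans ht.2⟩)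

lemma IsConstrainedTrajectory.Jcost_eq (hT : 0 ≤ T) :
    Jcost T h H x u = (∫ t in 0..T, (h ∘ dataClamp T a b) (t, x t, u t)) + H (x T) := by
  rw [hxu.intervalIntegral_dataClamp_eq hXab h (right_mem_Icc.2 hT), Jcost]

variable (hT : 0 ≤ T) (hf : ContinuousOn f (Icc 0 T ×ˢ univ))
  (hg : ContinuousOn g (Icc 0 T ×ˢ univ))

include hT hf hg

lemma IsConstrainedTrajectory.isAdmissiblePair : IsAdmissiblePair T X XT x₀ f g x u := by
  have hx0 : x 0 ∈ Icc a b := hXab (hxu.state_mem 0 (left_mem_Icc.2 hT))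
  have hF := continuousOn_Fvec hf hg
  obtain ⟨c, hc⟩ := exists_norm_comp_dataClamp_le hT (hx0.1.trans hx0.2) hF
  have hint := intervalIntegrable_comp_path
    (uniformContinuous_comp_dataClamp hT (hx0.1.trans hx0.2) hF).continuous hc
    (hxu.measurable_state.prodMk hxu.measurable_control) 0 T
  rw [intervalIntegrable_iff_integrableOn_Icc_of_le hT] at hint
  refine ⟨hxu.measurable_control, fun t _ => hxu.control_mem t, ?_, hxu.terminal_mem,
    hxu.state_mem, hint.congr_fun (fun s hs => eqOn_comp_dataClamp hXab _ (hxu.mem hs))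
    measurableSet_Icc, fun t ht => ?_⟩
  · simpa using hxu.eq_add_intervalIntegral (left_mem_Icc.2 hT)
  · rw [hxu.eq_add_intervalIntegral ht, hxu.intervalIntegral_dataClamp_eq hXab _ ht]

lemma IsConstrainedTrajectory.integral_LFop_eq_sub {v : ℝ × (Fin n → ℝ) → ℝ}
    (hv : ContDiff ℝ 1 v) :
    ∫ t in Icc 0 T, LFop f g v (t, x t, u t) = v (T, x T) - v (0, x₀) := by
  have hx0 : x 0 ∈ Icc a b := hXab (hxu.state_mem 0 (left_mem_Icc.2 hT))
  have hF := continuousOn_Fvec hf hg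
  obtain ⟨c, hc⟩ := exists_norm_comp_dataClamp_le hT (hx0.1.trans hx0.2) hF
  rw [← hxu.intervalIntegral_fderiv_eq_sub hT
    (uniformContinuous_comp_dataClamp hT (hx0.1.trans hx0.2) hF).continuous hc hv,
    intervalIntegral_eq_setIntegral_Icc hT, LFop_eq_fderiv]
  refine setIntegral_congr_fun measurableSet_Icc fun s hs => ?_
  rw [eqOn_comp_dataClamp hXab _ (hxu.mem hs)]

theorem IsConstrainedTrajectory.qFeasible_occupationMeasure (hX : IsCompact X)
    (hXT : IsCompact XT) :
    QFeasible T X XT x₀ f g (occupationMeasure T x u) (Measure.dirac (x T)) := by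
  have hγ : Measurable fun t => (t, x t, u t) :=
    measurable_id.prodMk (hxu.measurable_state.prodMk hxu.measurable_control)
  have hsupp : occupationMeasure T x u (Icc 0 T ×ˢ X ×ˢ Ubox m)ᶜ = 0 := by
    refine mem_ae_iff.1 ((ae_map_iff hγ.aemeasurable (isCompact_dataSet hX).measurableSet).2 ?_)
    exact (ae_restrict_iff' measurableSet_Icc).2 (.of_forall fun t => hxu.mem)
  refine ⟨inferInstance, inferInstance, hsupp, ?_, fun v hv => ?_⟩
  · rw [Measure.dirac_apply' _ hXT.measurableSet.compl]
    simp [hxu.terminal_mem]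
  · have hint : Integrable (LFop f g v) (occupationMeasure T x u) :=
      integrable_of_continuousOn_of_measure_compl_eq_zero (isCompact_dataSet hX) hsupp
        ((continuousOn_LFop hf hg hv).mono (prod_mono_right (subset_univ _)))
    rw [integral_dirac, integral_occupationMeasure hxu.measurable_state hxu.measurable_control
      hint.aestronglyMeasurable, hxu.integral_LFop_eq_sub hXab hT hf hg hv]
    ring

end OfConstrainedTrajectory

lemma IsConstrainedTrajectory.Jcost_mem_QVals
    (hxu : IsConstrainedTrajectory (Fvec f g ∘ dataClamp T a b) (Ubox m) T x₀ X XT x u)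
    (hXab : X ⊆ Icc a b) (hT : 0 ≤ T) (hf : ContinuousOn f (Icc 0 T ×ˢ univ))
    (hg : ContinuousOn g (Icc 0 T ×ˢ univ)) (hX : IsCompact X) (hXT : IsCompact XT)
    (hh : ContinuousOn h (Icc 0 T ×ˢ univ)) : Jcost T h H x u ∈ QVals T X XT x₀ f g h H := by
  have hocc := hxu.qFeasible_occupationMeasure hXab hT hf hg hX hXT
  refine ⟨_, _, hocc, ?_⟩
  rw [Qcost, Jcost, integral_dirac, integral_occupationMeasure hxu.measurable_state
    hxu.measurable_control (hocc.integrable hX hh).aestronglyMeasurable]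

end AdmissiblePairs

section OptimalPairs

variable {n m : ℕ} {f : ℝ × (Fin n → ℝ) → Fin n → ℝ} {g : ℝ × (Fin n → ℝ) → Fin n → Fin m → ℝ}
  {h ψ : ℝ × (Fin n → ℝ) × (Fin m → ℝ) → ℝ} {H : (Fin n → ℝ) → ℝ} {T : ℝ}
  {X XT : Set (Fin n → ℝ)} {a b x₀ : Fin n → ℝ}
  {η : Measure (ℝ × (Fin n → ℝ) × (Fin m → ℝ))} {ηT : Measure (Fin n → ℝ)}
  (hX : IsCompact X) (hXT : IsCompact XT) (hf : ContinuousOn f (Icc 0 T ×ˢ univ))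
  (hg : ContinuousOn g (Icc 0 T ×ˢ univ)) (hh : ContinuousOn h (Icc 0 T ×ˢ univ))
  (hH : ContinuousOn H XT) (hη : QFeasible T X XT x₀ f g η ηT)

include hX hXT hf hg hh hH hη

lemma QFeasible.dualValueLE_sub_mul (hXab : X ⊆ Icc a b) (hψ : ContinuousOn ψ (Icc 0 T ×ˢ univ))
    (s : ℝ) :
    DualValueLE (Icc 0 T ×ˢ X ×ˢ Ubox m) XT (Fvec f g ∘ dataClamp T a b)
      (fun z => (h ∘ dataClamp T a b) z - s * (ψ ∘ dataClamp T a b) z) H T x₀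
      (Qcost h H η ηT - s * ∫ z, ψ z ∂η) := by
  have hcost : Qcost (fun z => h z - s * ψ z) H η ηT = Qcost h H η ηT - s * ∫ z, ψ z ∂η := by
    rw [Qcost, Qcost, integral_sub (hη.integrable hX hh) ((hη.integrable hX hψ).const_mul s),
      integral_const_mul]
    ring
  rw [← hcost]
  exact (hη.dualValueLE hX hXT hf hg (hh.sub (continuousOn_const.mul hψ)) hH).congr
    (eqOn_comp_dataClamp hXab _) (eqOn_comp_dataClamp hXab fun z => h z - s * ψ z)

variable (hT : 0 < T) (hconv : ∀ t x, ConvexOn ℝ (Ubox m) fun u => h (t, x, u))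
  (hηopt : IsLeast (QVals T X XT x₀ f g h H) (Qcost h H η ηT))

include hT hconv hηopt

lemma exists_isConstrainedTrajectory_of_concaveOn (hXab : X ⊆ Icc a b) (hXn : X.Nonempty)
    (hXTn : XT.Nonempty) (hψ : ContinuousOn ψ (Icc 0 T ×ˢ univ))
    (hψc : ∀ t x, ConcaveOn ℝ (Ubox m) fun u => ψ (t, x, u)) :
    ∃ x u, IsConstrainedTrajectory (Fvec f g ∘ dataClamp T a b) (Ubox m) T x₀ X XT x u ∧
      Jcost T h H x u ≤ Qcost h H η ηT ∧ ∫ z, ψ z ∂η ≤ ∫ t in Icc 0 T, ψ (t, x t, u t) := by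
  have hab : a ≤ b := hXn.elim fun x hx => (hXab hx).1.trans (hXab hx).2
  obtain ⟨c, hprob, hψb⟩ :=
    exists_isConvexControlProblem_comp_dataClamp hT.le hab hf hg hh hψ hconv
  obtain ⟨x, u, hxu, hcost, hgain⟩ := exists_constrained_trajectory_of_forall_dualValueLE_sub hprob
    (uniformContinuous_comp_dataClamp hT.le hab hψ) hψb
    (fun t x => (hψc (clampIcc 0 T t) (clampIcc a b x)).congr fun u hu => by
      rw [Function.comp_apply, dataClamp_of_control_mem t x hu])
    hT hX.isClosed hXn hXT hXTn hH (hη.dualValueLE_sub_mul hX hXT hf hg hh hH hXab hψ)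
    (fun x u hxu => hxu.Jcost_eq (h := h) (H := H) hXab hT.le ▸
      hηopt.2 (hxu.Jcost_mem_QVals hXab hT.le hf hg hX hXT hh))
  exact ⟨x, u, hxu, (hxu.Jcost_eq hXab hT.le).trans_le hcost,
    hgain.trans_eq (hxu.intervalIntegral_dataClamp_eq hXab ψ (right_mem_Icc.2 hT.le))⟩

variable {xs : ℝ → Fin n → ℝ} {us : ℝ → Fin m → ℝ} (hopt : IsAdmissiblePair T X XT x₀ f g xs us)
  (hleast : IsLeast (JVals T X XT x₀ f g h H) (Jcost T h H xs us))
  (huniq : ∀ x u, IsAdmissiblePair T X XT x₀ f g x u → Jcost T h H x u = Jcost T h H xs us →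
    ∀ᵐ t ∂(volume.restrict (Icc 0 T)), x t = xs t ∧ u t = us t)

include hopt hleast huniq

theorem integral_le_setIntegral_of_concaveOn (hψ : ContinuousOn ψ (Icc 0 T ×ˢ univ))
    (hψc : ∀ t x, ConcaveOn ℝ (Ubox m) fun u => ψ (t, x, u)) :
    ∫ z, ψ z ∂η ≤ ∫ t in Icc 0 T, ψ (t, xs t, us t) := by
  obtain ⟨a, b, hXab⟩ := bddBelow_bddAbove_iff_subset_Icc.1
    ⟨hX.isBounded.bddBelow, hX.isBounded.bddAbove⟩
  obtain ⟨x, u, hxu, hle, hgain⟩ := exists_isConstrainedTrajectory_of_concaveOn hX hXT hf hg hh hH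
    hη hT hconv hηopt hXab ⟨_, hopt.2.2.2.2.1 T (right_mem_Icc.2 hT.le)⟩ ⟨_, hopt.2.2.2.1⟩ hψ hψc
  obtain ⟨y, w, hyx, hwu, hyw⟩ := hopt.exists_isConstrainedTrajectory hT.le hXab
  have hcost : Jcost T h H y w = Jcost T h H xs us := by
    rw [Jcost, Jcost, hyx (right_mem_Icc.2 hT.le)]
    congr 1
    exact setIntegral_congr_fun measurableSet_Icc fun t ht => by rw [hyx ht, hwu ht]
  have hweak : Qcost h H η ηT ≤ Jcost T h H xs us :=
    hcost ▸ hηopt.2 (hyw.Jcost_mem_QVals hXab hT.le hf hg hX hXT hh)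
  have hadm := hxu.isAdmissiblePair hXab hT.le hf hg
  have hae := huniq x u hadm ((hle.trans hweak).antisymm (hleast.2 ⟨x, u, hadm, rfl⟩))
  refine hgain.trans_eq (integral_congr_ae ?_)
  filter_upwards [hae] with t ht
  rw [ht.1, ht.2]

theorem integral_eq_setIntegral_of_convexOn_of_concaveOn (hψ : ContinuousOn ψ (Icc 0 T ×ˢ univ))
    (hψv : ∀ t x, ConvexOn ℝ (Ubox m) fun u => ψ (t, x, u))
    (hψc : ∀ t x, ConcaveOn ℝ (Ubox m) fun u => ψ (t, x, u)) :
    ∫ z, ψ z ∂η = ∫ t in Icc 0 T, ψ (t, xs t, us t) := by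
  refine (integral_le_setIntegral_of_concaveOn hX hXT hf hg hh hH hη hT hconv hηopt hopt hleast
    huniq hψ hψc).antisymm ?_
  have := integral_le_setIntegral_of_concaveOn hX hXT hf hg hh hH hη hT hconv hηopt hopt hleast
    huniq hψ.neg fun t x => (hψv t x).neg
  simp only [Pi.neg_apply, integral_neg] at this
  exact neg_le_neg_iff.1 this

lemma map_time_state_eq_map_graph :
    η.map (fun z => (z.1, z.2.1)) = (volume.restrict (Icc 0 T)).map fun t => (t, xs t) := by
  have := hη.1
  refine ext_of_forall_integral_eq_of_IsFiniteMeasure fun a => ?_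
  rw [integral_map (by fun_prop) a.continuous.aestronglyMeasurable,
    integral_map hopt.aemeasurable_graph a.continuous.aestronglyMeasurable]
  exact integral_eq_setIntegral_of_convexOn_of_concaveOn hX hXT hf hg hh hH hη hT hconv hηopt hopt
    hleast huniq (ψ := fun z => a (z.1, z.2.1)) (by fun_prop)
    (fun t x => convexOn_const (a (t, x)) convex_Ubox)
    fun t x => concaveOn_const (a (t, x)) convex_Ubox

lemma integral_smul_control_eq_setIntegral {φ : ℝ × (Fin n → ℝ) → ℝ} (hφ : Continuous φ) :
    ∫ z, φ (z.1, z.2.1) • z.2.2 ∂η = ∫ t in Icc 0 T, φ (t, xs t) • us t := by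
  have hintη : Integrable (fun z => φ (z.1, z.2.1) • z.2.2) η := hη.integrable hX (by fun_prop)
  have hints : IntegrableOn (fun t => φ (t, xs t) • us t) (Icc 0 T) :=
    hopt.integrableOn_control.continuousOn_smul
      (hφ.comp_continuousOn (continuousOn_id.prodMk hopt.continuousOn_state)) isCompact_Icc
  ext j
  rw [eval_integral fun j => hintη.eval j, eval_integral fun j => hints.eval j]
  let L (z : ℝ × (Fin n → ℝ)) : (Fin m → ℝ) →ₗ[ℝ] ℝ := φ z • LinearMap.proj j
  exact integral_eq_setIntegral_of_convexOn_of_concaveOn hX hXT hf hg hh hH hη hT hconv hηopt hopt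
    hleast huniq (ψ := fun z => L (z.1, z.2.1) z.2.2)
    (by simp only [L, LinearMap.smul_apply, LinearMap.proj_apply]; fun_prop)
    (fun t x => (L (t, x)).convexOn convex_Ubox) fun t x => (L (t, x)).concaveOn convex_Ubox

end OptimalPairs

section Disintegration

open scoped ContDiff

lemma ae_integral_kernel_eq_of_forall_integral_contDiff_smul_eq {S V W : Type*}
    [NormedAddCommGroup S] [NormedSpace ℝ S] [FiniteDimensional ℝ S] [MeasurableSpace S]
    [BorelSpace S] [MeasurableSpace V] [NormedAddCommGroup W] [NormedSpace ℝ W] [CompleteSpace W]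
    {μ : Measure S} [SFinite μ] {ν : Kernel S V} [IsSFiniteKernel ν] {q : S × V → W} {w : S → W}
    (hq : Integrable q (μ.compProd ν)) (hw : Integrable w μ)
    (h : ∀ a : S → ℝ, ContDiff ℝ ∞ a → HasCompactSupport a →
      ∫ p, a p.1 • q p ∂(μ.compProd ν) = ∫ z, a z • w z ∂μ) :
    ∀ᵐ z ∂μ, ∫ u, q (z, u) ∂(ν z) = w z := by
  refine ae_eq_of_integral_contDiff_smul_eq hq.integral_compProd.locallyIntegrable
    hw.locallyIntegrable fun a ha hac => ?_
  obtain ⟨c, hc⟩ := hac.exists_bound_of_continuous ha.continuous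
  have hint : Integrable (fun p => a p.1 • q p) (μ.compProd ν) :=
    hq.bdd_smul c (ha.continuous.measurable.comp measurable_fst).aestronglyMeasurable
      (.of_forall fun p => hc p.1)
  rw [← h a ha hac, Measure.integral_compProd hint]
  simp only [integral_smul]

lemma integral_Fvec {n m : ℕ} {f : ℝ × (Fin n → ℝ) → Fin n → ℝ}
    {g : ℝ × (Fin n → ℝ) → Fin n → Fin m → ℝ} {ρ : Measure (Fin m → ℝ)} [IsProbabilityMeasure ρ]
    (hρ : Integrable (fun u => u) ρ) (z : ℝ × (Fin n → ℝ)) :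
    ∫ u, Fvec f g (z.1, z.2, u) ∂ρ = Fvec f g (z.1, z.2, ∫ u, u ∂ρ) := by
  let L := LinearMap.toContinuousLinearMap (Matrix.mulVecLin (g z))
  change ∫ u, f z + L u ∂ρ = f z + L (∫ u, u ∂ρ)
  rw [integral_add (integrable_const _) (L.integrable_comp hρ), L.integral_comp_comm hρ,
    integral_const, probReal_univ, one_smul]

end Disintegration

section Barycenter

variable {n m : ℕ} {f : ℝ × (Fin n → ℝ) → Fin n → ℝ} {g : ℝ × (Fin n → ℝ) → Fin n → Fin m → ℝ}
  {h : ℝ × (Fin n → ℝ) × (Fin m → ℝ) → ℝ} {H : (Fin n → ℝ) → ℝ} {T : ℝ}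
  {X XT : Set (Fin n → ℝ)} {x₀ : Fin n → ℝ}
  {η : Measure (ℝ × (Fin n → ℝ) × (Fin m → ℝ))} {ηT : Measure (Fin n → ℝ)}
  {ν : Kernel (ℝ × (Fin n → ℝ)) (Fin m → ℝ)}

lemma QFeasible.integrable_snd_compProd {μ : Measure (ℝ × (Fin n → ℝ))}
    (hη : QFeasible T X XT x₀ f g η ηT) (hX : IsCompact X)
    (hdisint : η = (μ.compProd ν).map MeasurableEquiv.prodAssoc) :
    Integrable Prod.snd (μ.compProd ν) := by
  have := hη.integrable hX (q := fun z => z.2.2) (by fun_prop)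
  rwa [hdisint, integrable_map_equiv] at this

variable [IsMarkovKernel ν] (hT : 0 < T) (hX : IsCompact X) (hXT : IsCompact XT)
  (hf : ContinuousOn f (Icc 0 T ×ˢ univ)) (hg : ContinuousOn g (Icc 0 T ×ˢ univ))
  (hh : ContinuousOn h (Icc 0 T ×ˢ univ)) (hH : ContinuousOn H XT)
  {xs : ℝ → Fin n → ℝ} {us : ℝ → Fin m → ℝ}
  (hconv : ∀ t x, ConvexOn ℝ (Ubox m) fun u => h (t, x, u))
  (hopt : IsAdmissiblePair T X XT x₀ f g xs us)
  (hleast : IsLeast (JVals T X XT x₀ f g h H) (Jcost T h H xs us))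
  (huniq : ∀ x u, IsAdmissiblePair T X XT x₀ f g x u → Jcost T h H x u = Jcost T h H xs us →
    ∀ᵐ t ∂(volume.restrict (Icc 0 T)), x t = xs t ∧ u t = us t)
  (hη : QFeasible T X XT x₀ f g η ηT)
  (hηopt : IsLeast (QVals T X XT x₀ f g h H) (Qcost h H η ηT))
  (hdisint : η = ((η.map fun z => (z.1, z.2.1)).compProd ν).map MeasurableEquiv.prodAssoc)

include hT hX hXT hf hg hh hH hconv hopt hleast huniq hη hηopt hdisint

theorem ae_integral_kernel_eq_optimal_control :
    ∀ᵐ z ∂(η.map fun z => (z.1, z.2.1)), ∫ u, u ∂(ν z) = us z.1 := by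
  have := hη.1
  have hint := hη.integrable_snd_compProd hX hdisint
  have hmap := map_time_state_eq_map_graph hX hXT hf hg hh hH hη hT hconv hηopt hopt hleast huniq
  have hmeas : Measurable fun z : ℝ × (Fin n → ℝ) => us z.1 := hopt.1.comp measurable_fst
  refine ae_integral_kernel_eq_of_forall_integral_contDiff_smul_eq hint
    (hmap ▸ (integrable_map_measure hmeas.aestronglyMeasurable hopt.aemeasurable_graph).2
      hopt.integrableOn_control) fun a ha _ => ?_
  calc ∫ p, a p.1 • p.2 ∂((η.map fun z => (z.1, z.2.1)).compProd ν)
      = ∫ z, a (z.1, z.2.1) • z.2.2 ∂η := by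
        conv_rhs => rw [hdisint, integral_map_equiv]
        rfl
    _ = ∫ t in Icc 0 T, a (t, xs t) • us t :=
        integral_smul_control_eq_setIntegral hX hXT hf hg hh hH hη hT hconv hηopt hopt hleast huniq
          ha.continuous
    _ = ∫ z, a z • us z.1 ∂(η.map fun z => (z.1, z.2.1)) := by
        rw [hmap]
        exact (integral_map hopt.aemeasurable_graph
          (ha.continuous.measurable.smul hmeas).aestronglyMeasurable).symm

end Barycenter

theorem Q_optimal_kernel_barycenter_general
    {n m : ℕ} {T : ℝ} (hT : 0 < T) {X XT : Set (Fin n → ℝ)} (hX : IsCompact X)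
    (hXT : IsCompact XT) {x₀ : Fin n → ℝ}
    {f : ℝ × (Fin n → ℝ) → Fin n → ℝ} {g : ℝ × (Fin n → ℝ) → Fin n → Fin m → ℝ}
    (hf : ContinuousOn f (Icc 0 T ×ˢ univ)) (hg : ContinuousOn g (Icc 0 T ×ˢ univ))
    {h : ℝ × (Fin n → ℝ) × (Fin m → ℝ) → ℝ} {H : (Fin n → ℝ) → ℝ}
    (hh : ContinuousOn h (Icc 0 T ×ˢ univ)) (hH : ContinuousOn H XT)
    {xs : ℝ → Fin n → ℝ} {us : ℝ → Fin m → ℝ}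
    (hconv : ∀ t x, ConvexOn ℝ (Ubox m) fun u => h (t, x, u))
    (hopt : IsAdmissiblePair T X XT x₀ f g xs us)
    (hleast : IsLeast (JVals T X XT x₀ f g h H) (Jcost T h H xs us))
    (huniq : ∀ x u, IsAdmissiblePair T X XT x₀ f g x u → Jcost T h H x u = Jcost T h H xs us →
      ∀ᵐ t ∂(volume.restrict (Icc 0 T)), x t = xs t ∧ u t = us t)
    {η : Measure (ℝ × (Fin n → ℝ) × (Fin m → ℝ))} {ηT : Measure (Fin n → ℝ)}
    (hη : QFeasible T X XT x₀ f g η ηT)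
    (hηopt : IsLeast (QVals T X XT x₀ f g h H) (Qcost h H η ηT))
    {ν : Kernel (ℝ × (Fin n → ℝ)) (Fin m → ℝ)} [IsMarkovKernel ν]
    (hdisint : η = ((η.map fun z => (z.1, z.2.1)).compProd ν).map MeasurableEquiv.prodAssoc) :
    (∀ᵐ z ∂(η.map fun z => (z.1, z.2.1)),
      (fun k => f z k + ∑ j, g z k j * us z.1 j) = ∫ u, Fvec f g (z.1, z.2, u) ∂(ν z)) ∧
    ∀ᵐ z ∂(η.map fun z => (z.1, z.2.1)), us z.1 = ∫ u, u ∂(ν z) := by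
  have := hη.1
  have hbar := ae_integral_kernel_eq_optimal_control hT hX hXT hf hg hh hH hconv hopt hleast huniq
    hη hηopt hdisint
  have hint := hη.integrable_snd_compProd hX hdisint
  rw [Measure.integrable_compProd_iff hint.aestronglyMeasurable] at hint
  refine ⟨?_, hbar.mono fun _ => Eq.symm⟩
  filter_upwards [hbar, hint.1] with z hz hνz
  rw [integral_Fvec hνz, hz]
  rfl

/-- properties of the disintegration of an optimal solution of (Q):
the relaxed control kernel ν* reproduces the optimal vector field along the optimal
trajectory, and (when the columns of g are a.e. nonzero along x*) its barycenter is the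
optimal control. -/
theorem Q_optimal_kernel_barycenter
    {n m : ℕ} (hn : 0 < n) (hm : 0 < m) (T : ℝ) (hT : 0 < T)
    (X XT : Set (Fin n → ℝ)) (hX : IsCompact X) (hXT : IsCompact XT) (hXTsub : XT ⊆ X)
    (x₀ : Fin n → ℝ) (hx₀ : x₀ ∈ X)
    (f : ℝ × (Fin n → ℝ) → Fin n → ℝ) (g : ℝ × (Fin n → ℝ) → Fin n → Fin m → ℝ)
    (hf : ContinuousOn f (Set.Icc (0 : ℝ) T ×ˢ Set.univ))
    (hg : ContinuousOn g (Set.Icc (0 : ℝ) T ×ˢ Set.univ))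
    (h : ℝ × (Fin n → ℝ) × (Fin m → ℝ) → ℝ) (H : (Fin n → ℝ) → ℝ)
    (hh : Continuous h) (hH : Continuous H)
    (xs : ℝ → Fin n → ℝ) (us : ℝ → Fin m → ℝ)
    (hconv : ∀ (t : ℝ) (x : Fin n → ℝ),
      ConvexOn ℝ Set.univ (fun u : Fin m → ℝ => h (t, x, u)))
    (hopt : IsAdmissiblePair T X XT x₀ f g xs us)
    (hleast : IsLeast (JVals T X XT x₀ f g h H) (Jcost T h H xs us))
    (huniq : ∀ (x : ℝ → Fin n → ℝ) (u : ℝ → Fin m → ℝ),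
      IsAdmissiblePair T X XT x₀ f g x u → Jcost T h H x u = Jcost T h H xs us →
      ∀ᵐ t ∂(volume.restrict (Set.Icc (0 : ℝ) T)), x t = xs t ∧ u t = us t)
    (η : Measure (ℝ × (Fin n → ℝ) × (Fin m → ℝ))) (ηT : Measure (Fin n → ℝ))
    (hηfeas : QFeasible T X XT x₀ f g η ηT)
    (hηopt : IsLeast (QVals T X XT x₀ f g h H) (Qcost h H η ηT))
    (ν : Kernel (ℝ × (Fin n → ℝ)) (Fin m → ℝ)) [IsMarkovKernel ν]
    (hdisint : η = Measure.map MeasurableEquiv.prodAssoc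
      ((η.map (fun z => (z.1, z.2.1))).compProd ν)) :
    (∀ᵐ z ∂(η.map (fun z => (z.1, z.2.1))),
      (fun k => f z k + ∑ j, g z k j * us z.1 j) =
        ∫ u, Fvec f g (z.1, z.2, u) ∂(ν z)) ∧
    ((∀ j, ∀ᵐ t ∂(volume.restrict (Set.Icc (0 : ℝ) T)), ∃ k, g (t, xs t) k j ≠ 0) →
      ∀ᵐ z ∂(η.map (fun z => (z.1, z.2.1))), us z.1 = ∫ u, u ∂(ν z)) := by
  have hgen := Q_optimal_kernel_barycenter_general hT hX hXT hf hg hh.continuousOn hH.continuousOn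
    (fun t x => (hconv t x).subset (subset_univ _) convex_Ubox) hopt hleast huniq hηfeas hηopt
    hdisint
  exact ⟨hgen.1, fun _ => hgen.2⟩

end
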